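/- Assume Conditions (C). Let 1 > ε′ > 0. For f = f_n = o(n^{1/3}) sufficiently large and for any 1 ≥ ε > 0, there exists a constant A > 0 such that the probability that the following event fails is at most A·exp(−f^ε/A): the exploration of H*_f starts before time ℓ_n^{2/3}/(f^{1−ε}·C) and ends between times 2(1−ε′)·f·ℓ_n^{2/3}/C and 2(1+ε′)·f·ℓ_n^{2/3}/C of the breadth-first walk. -/

import Mathlib

open MeasureTheory Filter Asymptotics
open scoped Classical ENNReal Topology

noncomputable section

/-- `ℓ_n`: the total weight. -/
def ell (w : ∀ n : ℕ, Fin n → ℝ) (n : ℕ) : ℝ := ∑ i, w n i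

/-- Conditions (C) on the triangular array of weights, relative to the law `μ` of the
limiting random variable `W`. -/
structure CondC (w : ∀ n : ℕ, Fin n → ℝ) (μ : Measure ℝ) : Prop where
  isProb : IsProbabilityMeasure μ
  pos : ∀ᵐ x ∂μ, 0 < x
  w_pos : ∀ n, ∀ i : Fin n, 0 < w n i
  w_anti : ∀ n, ∀ i j : Fin n, i ≤ j → w n j ≤ w n i
  int3 : Integrable (fun x => x ^ 3) μ
  moment_eq : ∫ x, x ^ 2 ∂μ = ∫ x, x ∂μ
  weak : ∀ g : BoundedContinuousFunction ℝ ℝ,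
    Tendsto (fun n : ℕ => (∑ i : Fin n, g (w n i)) / (n : ℝ)) atTop (𝓝 (∫ x, g x ∂μ))
  ell_asymp : (fun n : ℕ => ell w n - (∫ x, x ∂μ) * (n : ℝ)) =o[atTop]
      fun n : ℕ => (n : ℝ) ^ ((2 : ℝ) / 3)
  sq_asymp : (fun n : ℕ => (∑ i : Fin n, (w n i) ^ 2) - (∫ x, x ^ 2 ∂μ) * (n : ℝ)) =o[atTop]
      fun n : ℕ => (n : ℝ) ^ ((2 : ℝ) / 3)
  cube_asymp : (fun n : ℕ => (∑ i : Fin n, (w n i) ^ 3) - (∫ x, x ^ 3 ∂μ) * (n : ℝ)) =o[atTop]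
      fun _ : ℕ => (1 : ℝ)
  max_asymp : (fun n : ℕ => ⨆ i : Fin n, w n i) =o[atTop] fun n : ℕ => (n : ℝ) ^ ((1 : ℝ) / 3)

/-- The constant `C = E[W³]/E[W]`. -/
def Cconst (μ : Measure ℝ) : ℝ := (∫ x, x ^ 3 ∂μ) / (∫ x, x ∂μ)

/-- The critical percolation parameter `p_f = (ℓ_n^{1/3} + f_n)/ℓ_n^{4/3}`. -/
def pf (w : ∀ n : ℕ, Fin n → ℝ) (f : ℕ → ℝ) (n : ℕ) : ℝ :=
  (ell w n ^ ((1 : ℝ) / 3) + f n) / ell w n ^ ((4 : ℝ) / 3)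

/-- A Bernoulli-type measure on `Bool` with parameter `p`. -/
def bern (p : ℝ) : Measure Bool :=
  ENNReal.ofReal (1 - p) • Measure.dirac false + ENNReal.ofReal p • Measure.dirac true

/-- The law of the independent edge indicators of the rank-1 inhomogeneous random graph
`G(W,p)`: the indicator attached to the (ordered) pair `(i,j)` is Bernoulli with success
probability `1 - exp (- w i * w j * p)`, all independent. -/
def graphMeasure (n : ℕ) (wn : Fin n → ℝ) (p : ℝ) : Measure (Fin n → Fin n → Bool) :=
  Measure.pi fun i => Measure.pi fun j => bern (1 - Real.exp (-(wn i * wn j * p)))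

/-- The simple graph built from a sample of edge indicators: `i ~ j` iff `i ≠ j` and the
indicator of the pair `(min i j, max i j)` is `true`. -/
def graphOf {n : ℕ} (ω : Fin n → Fin n → Bool) : SimpleGraph (Fin n) :=
  SimpleGraph.fromRel fun i j => ω (min i j) (max i j) = true

/-- The size (number of vertices) of a connected component. -/
def csize {n : ℕ} (G : SimpleGraph (Fin n)) (c : G.ConnectedComponent) : ℕ :=
  Nat.card {v : Fin n // G.connectedComponentMk v = c}

/-- The weight of a connected component: sum of the weights of its vertices. -/
def cweight {n : ℕ} (wn : Fin n → ℝ) (G : SimpleGraph (Fin n)) (c : G.ConnectedComponent) : ℝ :=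
  ∑ v : Fin n, if G.connectedComponentMk v = c then wn v else 0

/-- The number of edges of a connected component. -/
def cedges {n : ℕ} (G : SimpleGraph (Fin n)) (c : G.ConnectedComponent) : ℕ :=
  Nat.card {e : Sym2 (Fin n) // e ∈ G.edgeSet ∧ ∀ v ∈ e, G.connectedComponentMk v = c}

/-- The surplus (excess) of a connected component: edges − vertices + 1. -/
def csurplus {n : ℕ} (G : SimpleGraph (Fin n)) (c : G.ConnectedComponent) : ℤ :=
  (cedges G c : ℤ) - (csize G c : ℤ) + 1

/-- `c` is a largest connected component. -/
def isLargest {n : ℕ} (G : SimpleGraph (Fin n)) (c : G.ConnectedComponent) : Prop :=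
  ∀ c', csize G c' ≤ csize G c

/-- The finset of connected components of a graph on `Fin n`. -/
def comps {n : ℕ} (G : SimpleGraph (Fin n)) : Finset G.ConnectedComponent :=
  Finset.univ.image G.connectedComponentMk

/-- The law of the size-biased random order without replacement `(v(1),…,v(n))`, seen as a
measure on functions `Fin n → Fin n` (supported on permutations `σ`, with
`P(v = σ) = ∏_i w (σ i) / (ℓ_n − ∑_{k<i} w (σ k))`). -/
def sbMeasure (n : ℕ) (wn : Fin n → ℝ) : Measure (Fin n → Fin n) :=
  Measure.sum fun σ : Equiv.Perm (Fin n) =>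
    ENNReal.ofReal (∏ i : Fin n,
        wn (σ i) / ((∑ k, wn k) - ∑ k ∈ Finset.univ.filter fun k => k < i, wn (σ k))) •
      Measure.dirac ⇑σ

/-- The joint law of (edge indicators of `G(W,p)`, size-biased order), the two being
independent. -/
def expMeasure' (n : ℕ) (wn : Fin n → ℝ) (p : ℝ) :
    Measure ((Fin n → Fin n → Bool) × (Fin n → Fin n)) :=
  Measure.sum fun σ : Equiv.Perm (Fin n) =>
    ENNReal.ofReal (∏ i : Fin n,
        wn (σ i) / ((∑ k, wn k) - ∑ k ∈ Finset.univ.filter fun k => k < i, wn (σ k))) •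
      (graphMeasure n wn p).map fun g => (g, ⇑σ)

/-- `sbW wn vord k` is `w_{v(k)}` (1-based), with the conventions `w_{v(0)} = 0` and
`w_{v(k)} = 0` for `k > n`. -/
def sbW {n : ℕ} (wn : Fin n → ℝ) (vord : Fin n → Fin n) (k : ℕ) : ℝ :=
  if h : k - 1 < n then (if k = 0 then 0 else wn (vord ⟨k - 1, h⟩)) else 0

/-- The (0-based) first position, in the order `vord`, of a vertex of the component `c`;
this governs the order in which components are discovered by the breadth-first walk. -/
def firstIdx {n : ℕ} (G : SimpleGraph (Fin n)) (vord : Fin n → Fin n)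
    (c : G.ConnectedComponent) : ℕ :=
  sInf {i : ℕ | ∃ h : i < n, G.connectedComponentMk (vord ⟨i, h⟩) = c}

/-- The number of vertices explored strictly before the exploration of the component `c`
starts: components are explored in the order of their first appearance in `vord`, and the
exploration of `c` occupies the steps `startT c + 1, …, startT c + csize c`. -/
def startT {n : ℕ} (G : SimpleGraph (Fin n)) (vord : Fin n → Fin n)
    (c : G.ConnectedComponent) : ℕ :=
  ∑ v : Fin n, if firstIdx G vord (G.connectedComponentMk v) < firstIdx G vord c then 1 else 0

/-- The state (explored vertices, queue of discovered-but-unexplored vertices) of the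
breadth-first walk after `i` steps; roots are chosen as the first undiscovered vertex in the
order `vord`, and children are queued in the order `vord`. -/
def bfwQueue {n : ℕ} (G : SimpleGraph (Fin n)) (vord : Fin n → Fin n) :
    ℕ → Finset (Fin n) × List (Fin n)
  | 0 => (∅, [])
  | i + 1 =>
    let s := bfwQueue G vord i
    let q : List (Fin n) :=
      if s.2.isEmpty then ((List.ofFn vord).filter fun v => decide (v ∉ s.1)).take 1 else s.2
    match q with
    | [] => (s.1, [])
    | v :: rest =>
      (insert v s.1,
        rest ++ (List.ofFn vord).filter fun u => decide (G.Adj v u ∧ u ∉ s.1 ∧ u ∉ q))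

/-- The reflected exploration process `L` of the breadth-first walk:
`L_0 = 1`, `L_{i+1} = max (L_i + c(i+1) - 1) 1`. -/
def Lproc {n : ℕ} (G : SimpleGraph (Fin n)) (vord : Fin n → Fin n) (i : ℕ) : ℕ :=
  max (bfwQueue G vord i).2.length 1

/-- `discNbrs G vord i` is the number of neighbours of `v(i+1)` (0-based: `vord i`) outside
`{v(1),…,v(i+1)}`, i.e. the increment `X⁰_{i+1} + 1` of the process `L⁰`. -/
def discNbrs {n : ℕ} (G : SimpleGraph (Fin n)) (vord : Fin n → Fin n) (i : ℕ) : ℕ :=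
  Nat.card {j : Fin n // (∃ h : i < n, G.Adj (vord ⟨i, h⟩) j) ∧
    ∀ k : ℕ, ∀ hk : k < n, k ≤ i → vord ⟨k, hk⟩ ≠ j}

/-- The process `L⁰`: `L⁰_0 = 1`, `L⁰_{i+1} = L⁰_i + X⁰_{i+1}` where
`X⁰_{i+1} = ∑_{j ∉ {v(1),…,v(i+1)}} Y(v(i+1), j) − 1`. -/
def L0 {n : ℕ} (G : SimpleGraph (Fin n)) (vord : Fin n → Fin n) (m : ℕ) : ℤ :=
  1 - (m : ℤ) + ∑ i ∈ Finset.range m, (discNbrs G vord i : ℤ)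

/-- The deterministic-drift process `L̃^h`, defined by
`L̃^h_m + m − 1 = ∑_{i=1}^m ∑_{k > i+h} (1 − exp (−w_{v(i)} w_{v(k)} p))`,
the inner sum being over positions `k ≤ n` in the size-biased order. -/
def Ltilde {n : ℕ} (wn : Fin n → ℝ) (p : ℝ) (vord : Fin n → Fin n) (h m : ℕ) : ℝ :=
  1 - (m : ℝ) + ∑ i ∈ Finset.range m,
    if hi : i < n then
      ∑ k : Fin n, if i + h < (k : ℕ) then
        1 - Real.exp (-(wn (vord ⟨i, hi⟩) * wn (vord k) * p)) else 0
    else 0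

/-- The law of the independent exponential clocks `(T_k)_{k ≤ n}`, `T_k` of rate `w_k / ℓ_n`. -/
def clocksMeasure (n : ℕ) (wn : Fin n → ℝ) : Measure (Fin n → ℝ) :=
  Measure.pi fun k => ProbabilityTheory.expMeasure (wn k / ∑ i, wn i)

/-- `N(x)`: the number of clocks that have rung by time `x`. -/
def Nclock {n : ℕ} (x : ℝ) (ω : Fin n → ℝ) : ℕ :=
  ∑ k : Fin n, if ω k ≤ x then 1 else 0

/-- `X(x)`: the total weight of the clocks that have rung by time `x`. -/
def Xclock {n : ℕ} (wn : Fin n → ℝ) (x : ℝ) (ω : Fin n → ℝ) : ℝ :=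
  ∑ k : Fin n, if ω k ≤ x then wn k else 0

/-- Conditions (C2) on a pair of sequences `(a, b)`, relative to the constant `Ā`. -/
structure Cond2 (w : ∀ n : ℕ, Fin n → ℝ) (Abar : ℝ) (a b : ℕ → ℝ) : Prop where
  exp_lt : ∀ᶠ n : ℕ in atTop,
    Real.exp (-(b n) ^ 2 / (Abar * (b n * (n : ℝ) ^ ((1 : ℝ) / 3) + a n))) < 1 / 4
  a_top : Tendsto a atTop atTop
  b_top : Tendsto b atTop atTop
  a_lito : a =o[atTop] fun n : ℕ => (n : ℝ)
  b_bigO : b =O[atTop] a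
  a_bigO : a =O[atTop] fun n => b n * ell w n ^ ((1 : ℝ) / 3)
  a_sq_bigO : (fun n => a n ^ 2) =O[atTop] fun n => b n * ell w n

/-- Conditions (C3) on a quadruple of sequences `(a, b, c, d)`. -/
structure Cond3 (w : ∀ n : ℕ, Fin n → ℝ) (Abar : ℝ) (a b c d : ℕ → ℝ) : Prop where
  sum_lito : (fun n => a n + c n) =o[atTop] fun n : ℕ => (n : ℝ)
  diff_top : Tendsto (fun n => a n - b n) atTop atTop
  d_bigO : d =O[atTop] fun n => a n - b n
  c2 : Cond2 w Abar (fun n => Real.sqrt ((a n - b n) * (a n + c n))) d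

/-- The list of component sizes, sorted in decreasing order. -/
def sizesList {n : ℕ} (G : SimpleGraph (Fin n)) : List ℕ :=
  (((comps G).val.map fun c => csize G c).sort (· ≤ ·)).reverse

/-- `kthSize G k` is the size of the `(k+1)`-st largest connected component of `G`
(`0` if there is no such component). -/
def kthSize {n : ℕ} (G : SimpleGraph (Fin n)) (k : ℕ) : ℕ := (sizesList G).getD k 0

end


/-! ### Independent Bernoulli coordinates as finite sums -/

noncomputable def bq (q : ℝ) (b : Bool) : ℝ := if b then q else 1 - q

noncomputable def EB {I : Type*} [Fintype I] (q : I → ℝ) (F : (I → Bool) → ℝ) : ℝ :=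
  ∑ ω : I → Bool, (∏ i, bq (q i) (ω i)) * F ω

lemma bq_nonneg {q : ℝ} (h0 : 0 ≤ q) (h1 : q ≤ 1) (b : Bool) : 0 ≤ bq q b := by
  unfold bq; split_ifs <;> linarith

lemma EB_mono {I : Type*} [Fintype I] {q : I → ℝ} (h0 : ∀ i, 0 ≤ q i) (h1 : ∀ i, q i ≤ 1)
    {F F' : (I → Bool) → ℝ} (h : ∀ ω, F ω ≤ F' ω) : EB q F ≤ EB q F' := by
  unfold EB
  refine Finset.sum_le_sum fun ω _ => ?_
  exact mul_le_mul_of_nonneg_left (h ω)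
    (Finset.prod_nonneg fun i _ => bq_nonneg (h0 i) (h1 i) _)

lemma EB_sum {I ι : Type*} [Fintype I] (q : I → ℝ) (s : Finset ι) (F : ι → (I → Bool) → ℝ) :
    EB q (fun ω => ∑ k ∈ s, F k ω) = ∑ k ∈ s, EB q (F k) := by
  unfold EB
  rw [Finset.sum_comm]
  refine Finset.sum_congr rfl fun ω _ => ?_
  rw [Finset.mul_sum]

lemma EB_coord {I : Type*} [Fintype I] (q : I → ℝ) (e : I) (β : Bool)
    (F : (I → Bool) → ℝ) (hF : ∀ ω b, F (Function.update ω e b) = F ω) :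
    EB q (fun ω => (if ω e = β then 1 else 0) * F ω) = bq (q e) β * EB q F := by
  unfold EB
  rw [← (Equiv.funSplitAt e Bool).symm.sum_comp, ← (Equiv.funSplitAt e Bool).symm.sum_comp]
  rw [Fintype.sum_prod_type_right, Fintype.sum_prod_type_right, Finset.mul_sum]
  refine Finset.sum_congr rfl fun r _ => ?_
  have hupd : ∀ b, (Equiv.funSplitAt e Bool).symm (b, r)
      = Function.update ((Equiv.funSplitAt e Bool).symm (true, r)) e b := by
    intro b
    funext i
    by_cases h : i = e
    · subst h; simp [Equiv.funSplitAt, Equiv.piSplitAt]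
    · simp [Equiv.funSplitAt, Equiv.piSplitAt, h]
  have hW : ∀ b, ∏ i, bq (q i) ((Equiv.funSplitAt e Bool).symm (b, r) i)
      = bq (q e) b * ∏ i ∈ ({e} : Finset I)ᶜ, bq (q i) ((Equiv.funSplitAt e Bool).symm (true, r) i) := by
    intro b
    rw [Fintype.prod_eq_mul_prod_compl e, hupd b]
    congr 1
    · simp
    · refine Finset.prod_congr rfl fun i hi => ?_
      have : i ≠ e := by simpa using hi
      simp [Function.update_of_ne this]
  have hFe : ∀ b, F ((Equiv.funSplitAt e Bool).symm (b, r))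
      = F ((Equiv.funSplitAt e Bool).symm (true, r)) := by
    intro b; rw [hupd b, hF]
  have hv : ∀ b, (Equiv.funSplitAt e Bool).symm (b, r) e = b := by
    intro b; rw [hupd b]; simp
  simp only [hW, hFe, hv, Fintype.sum_bool]
  cases β <;> simp [bq] <;> ring

lemma EB_pattern {I J : Type*} [Fintype I] (q : I → ℝ) (c : J → I) (b : J → Bool)
    (U : Finset J) (hc : Set.InjOn c U) (F : (I → Bool) → ℝ)
    (hF : ∀ u ∈ U, ∀ ω β, F (Function.update ω (c u) β) = F ω) :
    EB q (fun ω => (∏ u ∈ U, if ω (c u) = b u then (1:ℝ) else 0) * F ω)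
      = (∏ u ∈ U, bq (q (c u)) (b u)) * EB q F := by
  induction U using Finset.induction_on with
  | empty => simp
  | insert a U ha ih =>
    have hc' : Set.InjOn c U := hc.mono (by simp)
    have ih' := ih hc' (fun u hu => hF u (Finset.mem_insert_of_mem hu))
    rw [Finset.prod_insert ha]
    simp only [Finset.prod_insert ha]
    simp only [mul_assoc]
    rw [EB_coord q (c a) (b a), ih']
    intro ω β
    rw [hF a (Finset.mem_insert_self _ _)]
    congr 1
    refine Finset.prod_congr rfl fun u hu => ?_
    have : c u ≠ c a := by
      intro h
      have := hc (Finset.mem_coe.2 (Finset.mem_insert_of_mem hu)) (by simp) h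
      exact ha (this ▸ hu)
    rw [Function.update_of_ne this]

lemma EB_split {I J : Type*} [Fintype I] (q : I → ℝ) (c : J → I)
    (U : Finset J) (hc : Set.InjOn c U) (F : Finset J → (I → Bool) → ℝ)
    (hF : ∀ N ⊆ U, ∀ u ∈ U, ∀ ω β, F N (Function.update ω (c u) β) = F N ω) :
    EB q (fun ω => F (U.filter fun u => ω (c u) = true) ω)
      = ∑ N ∈ U.powerset, ((∏ u ∈ N, q (c u)) * ∏ u ∈ U \ N, (1 - q (c u))) * EB q (F N) := by
  have key : ∀ ω, F (U.filter fun u => ω (c u) = true) ω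
      = ∑ N ∈ U.powerset, (∏ u ∈ U, if ω (c u) = decide (u ∈ N) then (1:ℝ) else 0) * F N ω := by
    intro ω
    rw [Finset.sum_eq_single (U.filter fun u => ω (c u) = true)]
    · rw [Finset.prod_eq_one, one_mul]
      intro u hu
      rw [if_pos]
      simp [hu]
    · intro N hN hne
      have : ∃ u ∈ U, ¬ (ω (c u) = decide (u ∈ N)) := by
        by_contra hcon
        push Not at hcon
        apply hne
        ext u
        simp only [Finset.mem_filter]
        constructor
        · intro hu
          have huU := (Finset.mem_powerset.1 hN) hu
          exact ⟨huU, by rw [hcon u huU]; simpa using hu⟩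
        · rintro ⟨huU, h⟩
          rw [hcon u huU] at h
          simpa using h
      obtain ⟨u, hu, hne⟩ := this
      rw [Finset.prod_eq_zero hu (by rw [if_neg hne]), zero_mul]
    · intro h
      exact absurd (Finset.mem_powerset.2 (Finset.filter_subset _ _)) h
  simp only [key]
  rw [EB_sum]
  refine Finset.sum_congr rfl fun N hN => ?_
  rw [EB_pattern q c (fun u => decide (u ∈ N)) U hc (F N) (hF N (Finset.mem_powerset.1 hN))]
  congr 1
  have hNU := Finset.mem_powerset.1 hN
  rw [← Finset.prod_sdiff hNU, mul_comm]
  congr 1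
  · refine Finset.prod_congr rfl fun u hu => ?_
    simp [bq, hu]
  · refine Finset.prod_congr rfl fun u hu => ?_
    have := (Finset.mem_sdiff.1 hu).2
    simp [bq, this]

/-! ### Size-biased lists -/

noncomputable def EO {α : Type*} [DecidableEq α] (w : α → ℝ) : ℕ → Finset α → (List α → ℝ) → ℝ
  | 0, _, F => F []
  | k + 1, R, F => ∑ v ∈ R, w v / (∑ u ∈ R, w u) * EO w k (R.erase v) (fun l => F (v :: l))

lemma EO_mono {α : Type*} [DecidableEq α] {w : α → ℝ} (hw : ∀ a, 0 < w a) (k : ℕ) (R : Finset α)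
    {F F' : List α → ℝ} (h : ∀ l, F l ≤ F' l) : EO w k R F ≤ EO w k R F' := by
  induction k generalizing R F F' with
  | zero => exact h []
  | succ k ih =>
    refine Finset.sum_le_sum fun v _ => ?_
    refine mul_le_mul_of_nonneg_left (ih _ fun l => h _) ?_
    exact div_nonneg (hw v).le (Finset.sum_nonneg fun u _ => (hw u).le)

lemma EO_sum {α ι : Type*} [DecidableEq α] (w : α → ℝ) (k : ℕ) (R : Finset α) (s : Finset ι)
    (a : ι → ℝ) (F : ι → List α → ℝ) :
    EO w k R (fun l => ∑ i ∈ s, a i * F i l) = ∑ i ∈ s, a i * EO w k R (F i) := by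
  induction k generalizing R F with
  | zero => rfl
  | succ k ih =>
    simp only [EO, ih, Finset.mul_sum]
    rw [Finset.sum_comm]
    refine Finset.sum_congr rfl fun i _ => Finset.sum_congr rfl fun v _ => by ring

/-- weight of a tuple in the size-biased order -/
noncomputable def twt {α : Type*} (w : α → ℝ) {k : ℕ} (τ : Fin k → α) : ℝ :=
  ∏ i, w (τ i) / ∑ j ∈ Finset.univ.filter (fun j => i ≤ j), w (τ j)

lemma twt_cons {α : Type*} (w : α → ℝ) {k : ℕ} (v : α) (τ : Fin k → α) :
    twt w (Fin.cons v τ : Fin (k+1) → α) = w v / (w v + ∑ j, w (τ j)) * twt w τ := by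
  unfold twt
  rw [Fin.prod_univ_succ]
  congr 1
  · simp [Fin.sum_univ_succ]
  · refine Finset.prod_congr rfl fun i _ => ?_
    congr 1
    rw [Finset.sum_filter, Finset.sum_filter, Fin.sum_univ_succ]
    simp

lemma EO_eq {α : Type*} [DecidableEq α] [Fintype α] (w : α → ℝ) (k : ℕ) (R : Finset α) (hR : R.card = k)
    (F : List α → ℝ) :
    ∑ τ : Fin k → α, (if Function.Injective τ ∧ Finset.univ.image τ = R then
      twt w τ * F (List.ofFn τ) else 0) = EO w k R F := by
  induction k generalizing R F with
  | zero =>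
    have : R = ∅ := Finset.card_eq_zero.1 hR
    subst this
    simp [EO, twt, Function.injective_of_subsingleton]
  | succ k ih =>
    rw [← (Fin.consEquiv (fun _ => α)).sum_comp, Fintype.sum_prod_type]
    simp only [EO]
    rw [← Finset.sum_subset (Finset.subset_univ R)]
    · refine Finset.sum_congr rfl fun v hv => ?_
      rw [← ih (R.erase v) (by rw [Finset.card_erase_of_mem hv, hR]; rfl), Finset.mul_sum]
      refine Finset.sum_congr rfl fun τ _ => ?_
      have hiff : (Function.Injective (Fin.cons v τ : Fin (k+1) → α) ∧
          Finset.univ.image (Fin.cons v τ : Fin (k+1) → α) = R) ↔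
          (Function.Injective τ ∧ Finset.univ.image τ = R.erase v) := by
        rw [Fin.cons_injective_iff]
        constructor
        · rintro ⟨⟨h1, h2⟩, h3⟩
          refine ⟨h2, ?_⟩
          rw [← h3]
          ext a
          simp only [Finset.mem_image, Finset.mem_univ, true_and, Finset.mem_erase, Fin.exists_fin_succ,
            Fin.cons_zero, Fin.cons_succ]
          constructor
          · rintro ⟨i, rfl⟩
            exact ⟨fun h => h1 ⟨i, h⟩, Or.inr ⟨i, rfl⟩⟩
          · rintro ⟨h, h' | h'⟩
            · exact absurd h'.symm h
            · exact h'
        · rintro ⟨h2, h3⟩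
          have hv' : v ∉ Set.range τ := by
            rintro ⟨i, hi⟩
            have : τ i ∈ R.erase v := by rw [← h3]; simp
            rw [hi] at this
            simp at this
          refine ⟨⟨hv', h2⟩, ?_⟩
          ext a
          have := congrArg (fun s => a ∈ s) h3
          simp only [Finset.mem_image, Finset.mem_univ, true_and, Finset.mem_erase] at this
          simp only [Finset.mem_image, Finset.mem_univ, true_and, Fin.exists_fin_succ,
            Fin.cons_zero, Fin.cons_succ]
          rw [this]
          constructor
          · rintro (h | h)
            · exact h ▸ hv
            · exact h.2
          · intro h
            by_cases hav : a = v
            · exact Or.inl hav.symm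
            · exact Or.inr ⟨hav, h⟩
      change (if (Function.Injective (Fin.cons v τ : Fin (k+1) → α) ∧
          Finset.univ.image (Fin.cons v τ : Fin (k+1) → α) = R) then
          twt w (Fin.cons v τ : Fin (k+1) → α) * F (List.ofFn (Fin.cons v τ : Fin (k+1) → α)) else 0) = _
      by_cases hc : (Function.Injective τ ∧ Finset.univ.image τ = R.erase v)
      · rw [if_pos (hiff.2 hc), if_pos hc, twt_cons]
        have hs : w v + ∑ j, w (τ j) = ∑ u ∈ R, w u := by
          rw [← Finset.add_sum_erase R w hv, ← hc.2, Finset.sum_image (fun a _ b _ h => hc.1 h)]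
        rw [hs, List.ofFn_cons]
        ring
      · rw [if_neg (fun h => hc (hiff.1 h)), if_neg hc, mul_zero]
    · intro v _ hv
      refine Finset.sum_eq_zero fun τ _ => ?_
      rw [if_neg]
      rintro ⟨_, h⟩
      apply hv
      rw [← h]
      exact Finset.mem_image.2 ⟨0, Finset.mem_univ _, rfl⟩

lemma sum_perm_eq {n : ℕ} (w : Fin n → ℝ) (F : List (Fin n) → ℝ) :
    ∑ σ : Equiv.Perm (Fin n), (∏ i : Fin n,
        w (σ i) / ((∑ k, w k) - ∑ k ∈ Finset.univ.filter fun k => k < i, w (σ k)))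
        * F (List.ofFn σ) = EO w n Finset.univ F := by
  rw [← EO_eq w n Finset.univ (by simp) F]
  refine Eq.trans ?_ (Finset.sum_filter (fun τ : Fin n → Fin n => Function.Injective τ ∧
    Finset.univ.image τ = Finset.univ) _)
  refine Finset.sum_bij' (fun σ _ => ⇑σ)
    (fun τ h => Equiv.ofBijective τ (Finite.injective_iff_bijective.1 (Finset.mem_filter.1 h).2.1))
    ?_ ?_ ?_ ?_ ?_
  · intro σ _
    simp only [Finset.mem_filter, Finset.mem_univ, true_and]
    exact ⟨σ.injective, by ext a; simp⟩
  · intro τ h; simp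
  · intro σ _; ext; simp
  · intro τ h; rfl
  · intro σ _
    congr 1
    unfold twt
    refine Finset.prod_congr rfl fun i _ => ?_
    congr 1
    rw [← Equiv.sum_comp σ w, ← Finset.sum_filter_add_sum_filter_not Finset.univ (fun k => k < i)]
    simp

/-! ### The exploration -/

structure St (n : ℕ) where
  l : List (Fin n)
  D : Finset (Fin n)
  Q : Finset (Fin n)
  m : ℕ

noncomputable def nb {n : ℕ} (G : SimpleGraph (Fin n)) (D Q : Finset (Fin n)) (x : Fin n) :
    Finset (Fin n) :=
  Finset.univ.filter fun u => u ∉ D ∪ Q ∧ G.Adj x u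

noncomputable def stepRoot {n : ℕ} (D : Finset (Fin n)) (m : ℕ) : List (Fin n) → St n
  | [] => ⟨[], D, ∅, m⟩
  | v :: l => if v ∈ D then ⟨l, D, ∅, m⟩ else ⟨l, D, {v}, m + 1⟩

noncomputable def step {n : ℕ} (G : SimpleGraph (Fin n)) (s : St n) : St n :=
  if h : s.Q.Nonempty then
    ⟨s.l, insert (s.Q.min' h) s.D, s.Q.erase (s.Q.min' h) ∪ nb G s.D s.Q (s.Q.min' h), s.m⟩
  else stepRoot s.D s.m s.l

def hit {n : ℕ} (G : SimpleGraph (Fin n)) (Bad R : Finset (Fin n) → Finset (Fin n) → ℕ → Prop) :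
    ℕ → St n → Prop
  | 0, s => Bad s.D s.Q s.m
  | k + 1, s => Bad s.D s.Q s.m ∨ (R s.D s.Q s.m ∧ hit G Bad R k (step G s))

lemma nb_disjoint {n : ℕ} (G : SimpleGraph (Fin n)) (D Q : Finset (Fin n)) (x : Fin n) :
    nb G D Q x ⊆ (D ∪ Q)ᶜ := by
  intro u hu
  simp only [nb, Finset.mem_filter] at hu
  simpa using hu.2.1

lemma new_disjoint {n : ℕ} {D Q N : Finset (Fin n)} {x : Fin n} (h : Disjoint D Q) (hx : x ∈ Q)
    (hN : N ⊆ (D ∪ Q)ᶜ) : Disjoint (insert x D) (Q.erase x ∪ N) := by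
  rw [Finset.disjoint_left] at h ⊢
  intro a ha hb
  rw [Finset.mem_insert] at ha
  rw [Finset.mem_union] at hb
  rcases hb with hb | hb
  · rw [Finset.mem_erase] at hb
    rcases ha with ha | ha
    · exact hb.1 ha
    · exact h ha hb.2
  · have := hN hb
    simp only [Finset.mem_compl, Finset.mem_union, not_or] at this
    rcases ha with ha | ha
    · exact this.2 (ha ▸ hx)
    · exact this.1 ha

lemma hit_congr {n : ℕ} (G G' : SimpleGraph (Fin n))
    (Bad R : Finset (Fin n) → Finset (Fin n) → ℕ → Prop) (k : ℕ) (s : St n)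
    (hd : Disjoint s.D s.Q)
    (hG : ∀ a b, a ∉ s.D → b ∉ s.D → (G.Adj a b ↔ G'.Adj a b)) :
    hit G Bad R k s ↔ hit G' Bad R k s := by
  induction k generalizing s with
  | zero => rfl
  | succ k ih =>
    have hstep : step G s = step G' s := by
      unfold step
      split_ifs with h
      · have hx := Finset.min'_mem s.Q h
        have : nb G s.D s.Q (s.Q.min' h) = nb G' s.D s.Q (s.Q.min' h) := by
          unfold nb
          ext u
          simp only [Finset.mem_filter, Finset.mem_univ, true_and, Finset.mem_union, not_or]
          constructor
          · rintro ⟨⟨h1, h2⟩, h3⟩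
            exact ⟨⟨h1, h2⟩, (hG _ _ (Finset.disjoint_right.1 hd hx) h1).1 h3⟩
          · rintro ⟨⟨h1, h2⟩, h3⟩
            exact ⟨⟨h1, h2⟩, (hG _ _ (Finset.disjoint_right.1 hd hx) h1).2 h3⟩
        rw [this]
      · rfl
    simp only [hit]
    rw [hstep]
    have hnew : Disjoint (step G' s).D (step G' s).Q ∧ s.D ⊆ (step G' s).D := by
      unfold step
      split_ifs with h
      · exact ⟨new_disjoint hd (Finset.min'_mem s.Q h) (nb_disjoint _ _ _ _),
          Finset.subset_insert _ _⟩
      · cases hl : s.l with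
        | nil => simp [stepRoot]
        | cons v l =>
          simp only [stepRoot]
          split_ifs with hv
          · simp
          · simp [hv]
    rw [ih (step G' s) hnew.1 (fun a b ha hb => hG a b (fun h => ha (hnew.2 h)) (fun h => hb (hnew.2 h)))]

lemma hit_mono {n : ℕ} (G : SimpleGraph (Fin n))
    (Bad R : Finset (Fin n) → Finset (Fin n) → ℕ → Prop) (k : ℕ) (s : St n)
    (h : hit G Bad R k s) : hit G Bad R (k+1) s := by
  induction k generalizing s with
  | zero => exact Or.inl h
  | succ k ih =>
    rcases h with h | ⟨h1, h2⟩
    · exact Or.inl h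
    · exact Or.inr ⟨h1, ih _ h2⟩

def cc {n : ℕ} (x u : Fin n) : Fin n × Fin n := (min x u, max x u)

lemma cc_eq {n : ℕ} {x u a b : Fin n} (h : cc a b = cc x u) : (a = x ∧ b = u) ∨ (a = u ∧ b = x) := by
  simp only [cc, Prod.mk.injEq] at h
  rcases le_total a b with h1 | h1 <;> rcases le_total x u with h2 | h2 <;>
    simp [h1, h2] at h <;> tauto

def gr {n : ℕ} (ω : Fin n × Fin n → Bool) : SimpleGraph (Fin n) := graphOf fun i j => ω (i, j)

lemma gr_adj {n : ℕ} (ω : Fin n × Fin n → Bool) (a b : Fin n) :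
    (gr ω).Adj a b ↔ a ≠ b ∧ ω (cc a b) = true := by
  simp only [gr, graphOf, SimpleGraph.fromRel_adj, cc]
  rw [min_comm b a, max_comm b a, or_self]

noncomputable def qe {n : ℕ} (w : Fin n → ℝ) (p : ℝ) (e : Fin n × Fin n) : ℝ :=
  1 - Real.exp (-(w e.1 * w e.2 * p))

lemma qe_cc {n : ℕ} (w : Fin n → ℝ) (p : ℝ) (x u : Fin n) :
    qe w p (cc x u) = 1 - Real.exp (-(w x * w u * p)) := by
  unfold qe cc
  rcases le_total x u with h | h
  · simp [h]
  · simp [h, mul_comm (w u) (w x)]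

lemma EB_one {I : Type*} [Fintype I] (q : I → ℝ) (a : ℝ) : EB q (fun _ => a) = a := by
  unfold EB
  rw [← Finset.sum_mul]
  have := Finset.prod_univ_sum (fun _ : I => (Finset.univ : Finset Bool)) (fun i b => bq (q i) b)
  rw [Fintype.piFinset_univ] at this
  rw [← this]
  simp [bq]

lemma EO_const {α : Type*} [DecidableEq α] {w : α → ℝ} (hw : ∀ a, 0 < w a) (k : ℕ)
    (R : Finset α) (hR : R.card = k) (a : ℝ) : EO w k R (fun _ => a) = a := by
  induction k generalizing R with
  | zero => rfl
  | succ k ih =>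
    simp only [EO]
    have hne : R.Nonempty := by rw [← Finset.card_pos]; omega
    have hpos : 0 < ∑ u ∈ R, w u := Finset.sum_pos (fun u _ => hw u) hne
    rw [Finset.sum_congr rfl (fun v hv => by
      rw [ih (R.erase v) (by rw [Finset.card_erase_of_mem hv, hR]; rfl)])]
    rw [← Finset.sum_mul, ← Finset.sum_div, div_self hpos.ne', one_mul]

section
variable {n : ℕ} {w : Fin n → ℝ} {p : ℝ}

lemma hit_le (hw : ∀ i, 0 < w i) (hp : 0 ≤ p)
    (Φ : Finset (Fin n) → Finset (Fin n) → ℕ → ℝ)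
    (Bad R : Finset (Fin n) → Finset (Fin n) → ℕ → Prop)
    (h0 : ∀ D Q m, 0 ≤ Φ D Q m)
    (hBad : ∀ D Q m, Bad D Q m → 1 ≤ Φ D Q m)
    (hexp : ∀ D Q m, Disjoint D Q → R D Q m → ¬ Bad D Q m → ∀ x ∈ Q,
      ∑ N ∈ (D ∪ Q)ᶜ.powerset, ((∏ u ∈ N, (1 - Real.exp (-(w x * w u * p)))) *
        ∏ u ∈ (D ∪ Q)ᶜ \ N, (1 - (1 - Real.exp (-(w x * w u * p))))) *
        Φ (insert x D) (Q.erase x ∪ N) m ≤ Φ D Q m)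
    (hroot : ∀ D m, R D ∅ m → ¬ Bad D ∅ m →
      ∑ v ∈ Dᶜ, w v * Φ D {v} (m + 1) ≤ (∑ v ∈ Dᶜ, w v) * Φ D ∅ m)
    (k : ℕ) (D Q : Finset (Fin n)) (m r : ℕ) (S : Finset (Fin n)) (hd : Disjoint D Q)
    (hS : (D ∪ Q)ᶜ ⊆ S) (hr : S.card = r) :
    EO w r S (fun l => EB (qe w p) (fun ω =>
      if hit (gr ω) Bad R k ⟨l, D, Q, m⟩ then 1 else 0)) ≤ Φ D Q m := by
  have hq0 : ∀ e, 0 ≤ qe w p e := by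
    intro e
    unfold qe
    have : Real.exp (-(w e.1 * w e.2 * p)) ≤ 1 := by
      rw [Real.exp_le_one_iff]
      have := mul_nonneg (mul_nonneg (hw e.1).le (hw e.2).le) hp
      linarith
    linarith
  have hq1 : ∀ e, qe w p e ≤ 1 := by
    intro e
    unfold qe
    have := Real.exp_pos (-(w e.1 * w e.2 * p))
    linarith
  induction k generalizing D Q m r S with
  | zero =>
    by_cases hb : Bad D Q m
    · simp only [hit, hb, if_true, EB_one]
      rw [EO_const hw r S hr]
      exact hBad _ _ _ hb
    · simp only [hit, hb, if_false, EB_one]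
      rw [EO_const hw r S hr]
      exact h0 _ _ _
  | succ k ih =>
    by_cases hb : Bad D Q m
    · simp only [hit, hb, true_or, if_true, EB_one]
      rw [EO_const hw r S hr]
      exact hBad _ _ _ hb
    by_cases hR : R D Q m
    swap
    · simp only [hit, hb, hR, false_and, false_or, if_false, EB_one]
      rw [EO_const hw r S hr]
      exact h0 _ _ _
    simp only [hit, hb, hR, true_and, false_or]
    by_cases hQ : Q.Nonempty
    · set x := Q.min' hQ with hxdef
      have hx : x ∈ Q := Finset.min'_mem Q hQ
      have hxD : x ∉ D := Finset.disjoint_right.1 hd hx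
      refine le_trans ?_ (hexp D Q m hd hR hb x hx)
      have hst : ∀ ω l, step (gr ω) ⟨l, D, Q, m⟩
          = ⟨l, insert x D, Q.erase x ∪ (D ∪ Q)ᶜ.filter (fun u => ω (cc x u) = true), m⟩ := by
        intro ω l
        have hnb : nb (gr ω) D Q x = (D ∪ Q)ᶜ.filter (fun u => ω (cc x u) = true) := by
          ext u
          simp only [nb, Finset.mem_filter, Finset.mem_univ, true_and, Finset.mem_compl, gr_adj]
          constructor
          · rintro ⟨h1, _, h3⟩
            exact ⟨h1, h3⟩
          · rintro ⟨h1, h3⟩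
            refine ⟨h1, ?_, h3⟩
            rintro rfl
            exact h1 (Finset.mem_union_right _ hx)
        simp only [step, hQ, dif_pos, ← hxdef, hnb]
      simp only [hst]
      have hsp : ∀ l : List (Fin n), EB (qe w p) (fun ω => if hit (gr ω) Bad R k
          ⟨l, insert x D, Q.erase x ∪ (D ∪ Q)ᶜ.filter (fun u => ω (cc x u) = true), m⟩
            then (1:ℝ) else 0)
          = ∑ N ∈ (D ∪ Q)ᶜ.powerset, ((∏ u ∈ N, (1 - Real.exp (-(w x * w u * p)))) *
            ∏ u ∈ (D ∪ Q)ᶜ \ N, (1 - (1 - Real.exp (-(w x * w u * p))))) *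
            EB (qe w p) (fun ω => if hit (gr ω) Bad R k
              ⟨l, insert x D, Q.erase x ∪ N, m⟩ then (1:ℝ) else 0) := by
        intro l
        have := EB_split (qe w p) (cc x) (D ∪ Q)ᶜ ?_ (fun N ω => if hit (gr ω) Bad R k
              ⟨l, insert x D, Q.erase x ∪ N, m⟩ then (1:ℝ) else 0) ?_
        · simp only [qe_cc] at this
          convert this
        · intro a _ b _ hab
          rcases cc_eq hab with h | h
          · exact h.2
          · exact h.2.trans h.1
        · intro N hN u hu ω β
          have := hit_congr (gr (Function.update ω (cc x u) β)) (gr ω) Bad R k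
            ⟨l, insert x D, Q.erase x ∪ N, m⟩ (new_disjoint hd hx hN) (by
              intro a b ha hb
              simp only [Finset.mem_insert, not_or] at ha hb
              rw [gr_adj, gr_adj, Function.update_of_ne]
              intro h
              rcases cc_eq h with h | h
              · exact ha.1 h.1
              · exact hb.1 h.2)
          refine if_congr ?_ rfl rfl
          convert this
      simp only [hsp]
      rw [EO_sum]
      refine Finset.sum_le_sum fun N hN => ?_
      rw [Finset.mem_powerset] at hN
      refine mul_le_mul_of_nonneg_left ?_ ?_
      · refine ih (insert x D) (Q.erase x ∪ N) m r S (new_disjoint hd hx hN) ?_ hr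
        intro u hu
        apply hS
        simp only [Finset.mem_compl, Finset.mem_union, Finset.mem_insert, Finset.mem_erase,
          not_or] at hu ⊢
        refine ⟨hu.1.2, fun h => hu.2.1 ⟨hu.1.1, h⟩⟩
      · refine mul_nonneg (Finset.prod_nonneg fun u _ => ?_) (Finset.prod_nonneg fun u _ => ?_)
        · have := hq0 (cc x u)
          rwa [qe_cc] at this
        · have := hq1 (cc x u)
          rw [qe_cc] at this
          linarith
    · rw [Finset.not_nonempty_iff_eq_empty] at hQ
      subst hQ
      have hst : ∀ ω l, step (gr ω) ⟨l, D, ∅, m⟩ = stepRoot D m l := by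
        intro ω l; simp [step]
      simp only [hst]
      cases r with
      | zero =>
        have := ih D ∅ m 0 S hd hS hr
        simp only [EO, stepRoot] at this ⊢
        convert this using 3
        exact if_congr Iff.rfl rfl rfl
      | succ r =>
        simp only [EO]
        have hne : S.Nonempty := by rw [← Finset.card_pos]; omega
        have hpos : 0 < ∑ u ∈ S, w u := Finset.sum_pos (fun u _ => hw u) hne
        have hS' : Dᶜ ⊆ S := by simpa using hS
        have hle : ∀ v ∈ S, w v / (∑ u ∈ S, w u) * EO w r (S.erase v) (fun l =>
            EB (qe w p) (fun ω => if hit (gr ω) Bad R k (stepRoot D m (v :: l)) then 1 else 0))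
            ≤ w v / (∑ u ∈ S, w u) * (if v ∈ D then Φ D ∅ m else Φ D {v} (m+1)) := by
          intro v hv
          refine mul_le_mul_of_nonneg_left ?_ (div_nonneg (hw v).le hpos.le)
          have hcard : (S.erase v).card = r := by rw [Finset.card_erase_of_mem hv, hr]; rfl
          by_cases hvD : v ∈ D
          · simp only [stepRoot, hvD, if_true]
            refine ih D ∅ m r (S.erase v) hd ?_ hcard
            intro u hu
            rw [Finset.mem_erase]
            refine ⟨?_, hS hu⟩
            rintro rfl
            simp [hvD] at hu
          · simp only [stepRoot, hvD, if_false]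
            refine ih D {v} (m+1) r (S.erase v) (by simpa using hvD) ?_ hcard
            intro u hu
            rw [Finset.mem_erase]
            simp at hu
            exact ⟨hu.1, hS' (by simpa using hu.2)⟩
        refine (Finset.sum_le_sum hle).trans ?_
        have h1 := hroot D m hR hb
        have h2 : ∑ v ∈ S, w v / (∑ u ∈ S, w u) * (if v ∈ D then Φ D ∅ m else Φ D {v} (m+1))
            = (∑ v ∈ S \ Dᶜ, w v * Φ D ∅ m + ∑ v ∈ Dᶜ, w v * Φ D {v} (m+1)) / (∑ u ∈ S, w u) := by
          rw [← Finset.sum_sdiff hS', add_div, Finset.sum_div, Finset.sum_div]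
          congr 1
          · refine Finset.sum_congr rfl fun v hv => ?_
            have : v ∈ D := by simpa using (Finset.mem_sdiff.1 hv).2
            rw [if_pos this]; ring
          · refine Finset.sum_congr rfl fun v hv => ?_
            have : v ∉ D := by simpa using hv
            rw [if_neg this]; ring
        rw [h2, div_le_iff₀ hpos, ← Finset.sum_sdiff hS', mul_add, ← Finset.sum_mul]
        nlinarith
end

/-! ### From finite sums to the measure -/

lemma bern_singleton (q : ℝ) (b : Bool) : bern q {b} = ENNReal.ofReal (bq q b) := by
  cases b <;> simp [bern, bq]

instance bern_finite (q : ℝ) : IsFiniteMeasure (bern q) := by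
  unfold bern
  refine ⟨?_⟩
  simp

lemma qe_nonneg {n : ℕ} {w : Fin n → ℝ} {p : ℝ} (hw : ∀ i, 0 < w i) (hp : 0 ≤ p)
    (e : Fin n × Fin n) : 0 ≤ qe w p e := by
  unfold qe
  have : Real.exp (-(w e.1 * w e.2 * p)) ≤ 1 := by
    rw [Real.exp_le_one_iff]
    have := mul_nonneg (mul_nonneg (hw e.1).le (hw e.2).le) hp
    linarith
  linarith

lemma qe_le_one {n : ℕ} (w : Fin n → ℝ) (p : ℝ) (e : Fin n × Fin n) : qe w p e ≤ 1 := by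
  unfold qe
  have := Real.exp_pos (-(w e.1 * w e.2 * p))
  linarith

lemma graphMeasure_singleton {n : ℕ} {w : Fin n → ℝ} {p : ℝ} (hw : ∀ i, 0 < w i) (hp : 0 ≤ p)
    (g : Fin n → Fin n → Bool) :
    graphMeasure n w p {g} = ENNReal.ofReal (∏ e : Fin n × Fin n, bq (qe w p e) (g e.1 e.2)) := by
  unfold graphMeasure
  rw [Measure.pi_singleton]
  simp only [Measure.pi_singleton, bern_singleton]
  rw [Fintype.prod_prod_type, ENNReal.ofReal_prod_of_nonneg]
  · refine Finset.prod_congr rfl fun i _ => ?_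
    rw [ENNReal.ofReal_prod_of_nonneg]
    · rfl
    · intro j _
      exact bq_nonneg (qe_nonneg hw hp _) (qe_le_one w p _) _
  · intro i _
    refine Finset.prod_nonneg fun j _ => ?_
    exact bq_nonneg (qe_nonneg hw hp _) (qe_le_one w p _) _

lemma graphMeasure_eq {n : ℕ} {w : Fin n → ℝ} {p : ℝ} (hw : ∀ i, 0 < w i) (hp : 0 ≤ p)
    (T : Set (Fin n → Fin n → Bool)) :
    graphMeasure n w p T = ENNReal.ofReal (EB (qe w p) (fun ω =>
      if (fun i j => ω (i, j)) ∈ T then 1 else 0)) := by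
  have h1 : graphMeasure n w p T = ∑ g ∈ T.toFinset, graphMeasure n w p {g} := by
    rw [sum_measure_singleton]; simp
  rw [h1]
  simp only [graphMeasure_singleton hw hp]
  rw [← ENNReal.ofReal_sum_of_nonneg]
  · congr 1
    have hE : EB (qe w p) (fun ω => if (fun i j => ω (i, j)) ∈ T then (1:ℝ) else 0)
        = ∑ g : Fin n → Fin n → Bool, (∏ e : Fin n × Fin n, bq (qe w p e) (g e.1 e.2)) *
          if g ∈ T then (1:ℝ) else 0 := by
      unfold EB
      refine Finset.sum_bij (fun ω _ => fun i j => ω (i, j)) (fun _ _ => Finset.mem_univ _) ?_ ?_ ?_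
      · intro a _ b _ hab
        funext e
        exact congrFun (congrFun hab e.1) e.2
      · intro g _
        refine ⟨fun e => g e.1 e.2, ?_, rfl⟩
        simp
      · intro ω _
        rfl
    rw [hE]
    rw [← Finset.sum_subset (Finset.subset_univ T.toFinset)]
    · refine Finset.sum_congr rfl fun g hg => ?_
      have : g ∈ T := by simpa using hg
      simp [this]
    · intro g _ hg
      have : g ∉ T := by simpa using hg
      simp [this]
  · intro g _
    refine Finset.prod_nonneg fun j _ => ?_
    exact bq_nonneg (qe_nonneg hw hp _) (qe_le_one w p _) _

lemma EB_nonneg {I : Type*} [Fintype I] {q : I → ℝ} (h0 : ∀ i, 0 ≤ q i) (h1 : ∀ i, q i ≤ 1)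
    {F : (I → Bool) → ℝ} (h : ∀ ω, 0 ≤ F ω) : 0 ≤ EB q F := by
  unfold EB
  exact Finset.sum_nonneg fun ω _ => mul_nonneg
    (Finset.prod_nonneg fun i _ => bq_nonneg (h0 i) (h1 i) _) (h ω)

lemma perm_wt_nonneg {n : ℕ} {w : Fin n → ℝ} (hw : ∀ i, 0 < w i) (σ : Equiv.Perm (Fin n)) :
    0 ≤ ∏ i : Fin n,
        w (σ i) / ((∑ k, w k) - ∑ k ∈ Finset.univ.filter fun k => k < i, w (σ k)) := by
  refine Finset.prod_nonneg fun i _ => div_nonneg (hw _).le ?_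
  rw [← Equiv.sum_comp σ w, sub_nonneg]
  exact Finset.sum_le_sum_of_subset_of_nonneg (Finset.filter_subset _ _) fun k _ _ => (hw _).le

lemma expMeasure_list {n : ℕ} {w : Fin n → ℝ} {p : ℝ} (hw : ∀ i, 0 < w i) (hp : 0 ≤ p)
    (P : SimpleGraph (Fin n) → List (Fin n) → Prop) :
    expMeasure' n w p {ω | P (graphOf ω.1) (List.ofFn ω.2)}
      = ENNReal.ofReal (EO w n Finset.univ (fun l => EB (qe w p) (fun ω =>
        if P (gr ω) l then 1 else 0))) := by
  unfold expMeasure'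
  rw [Measure.sum_apply _ (Set.toFinite _).measurableSet, tsum_fintype, ← sum_perm_eq,
    ENNReal.ofReal_sum_of_nonneg]
  · refine Finset.sum_congr rfl fun σ _ => ?_
    rw [Measure.smul_apply, Measure.map_apply (measurable_of_countable _)
      (Set.toFinite _).measurableSet, graphMeasure_eq hw hp, smul_eq_mul,
      ENNReal.ofReal_mul (perm_wt_nonneg hw σ)]
    rfl
  · intro σ _
    refine mul_nonneg (perm_wt_nonneg hw σ) (EB_nonneg (qe_nonneg hw hp) (qe_le_one w p) ?_)
    intro ω
    split_ifs <;> norm_num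

lemma hit_bound {n : ℕ} {w : Fin n → ℝ} {p : ℝ} (hw : ∀ i, 0 < w i) (hp : 0 ≤ p)
    (Φ : Finset (Fin n) → Finset (Fin n) → ℕ → ℝ)
    (Bad R : Finset (Fin n) → Finset (Fin n) → ℕ → Prop)
    (h0 : ∀ D Q m, 0 ≤ Φ D Q m)
    (hBad : ∀ D Q m, Bad D Q m → 1 ≤ Φ D Q m)
    (hexp : ∀ D Q m, Disjoint D Q → R D Q m → ¬ Bad D Q m → ∀ x ∈ Q,
      ∑ N ∈ (D ∪ Q)ᶜ.powerset, ((∏ u ∈ N, (1 - Real.exp (-(w x * w u * p)))) *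
        ∏ u ∈ (D ∪ Q)ᶜ \ N, (1 - (1 - Real.exp (-(w x * w u * p))))) *
        Φ (insert x D) (Q.erase x ∪ N) m ≤ Φ D Q m)
    (hroot : ∀ D m, R D ∅ m → ¬ Bad D ∅ m →
      ∑ v ∈ Dᶜ, w v * Φ D {v} (m + 1) ≤ (∑ v ∈ Dᶜ, w v) * Φ D ∅ m) :
    expMeasure' n w p {ω | ∃ k, hit (graphOf ω.1) Bad R k ⟨List.ofFn ω.2, ∅, ∅, 0⟩}
      ≤ ENNReal.ofReal (Φ ∅ ∅ 0) := by
  have hU : {ω : (Fin n → Fin n → Bool) × (Fin n → Fin n) |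
      ∃ k, hit (graphOf ω.1) Bad R k ⟨List.ofFn ω.2, ∅, ∅, 0⟩}
      = ⋃ k, {ω | hit (graphOf ω.1) Bad R k ⟨List.ofFn ω.2, ∅, ∅, 0⟩} := by
    ext ω; simp
  rw [hU, Monotone.measure_iUnion]
  · refine iSup_le fun k => ?_
    have := expMeasure_list hw hp (fun G l => hit G Bad R k ⟨l, ∅, ∅, 0⟩)
    rw [this]
    refine ENNReal.ofReal_le_ofReal ?_
    exact hit_le hw hp Φ Bad R h0 hBad hexp hroot k ∅ ∅ 0 n Finset.univ (by simp) (by simp)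
      (by simp)
  · refine monotone_nat_of_le_succ fun k ω h => ?_
    exact hit_mono _ _ _ _ _ h

/-! ### Deterministic facts about the exploration -/

section det
variable {n : ℕ}

lemma hit_of_bad (G : SimpleGraph (Fin n))
    (Bad R : Finset (Fin n) → Finset (Fin n) → ℕ → Prop) (k : ℕ) (s : St n)
    (hR : ∀ i < k, R ((step G)^[i] s).D ((step G)^[i] s).Q ((step G)^[i] s).m)
    (hb : Bad ((step G)^[k] s).D ((step G)^[k] s).Q ((step G)^[k] s).m) :
    hit G Bad R k s := by
  induction k generalizing s with
  | zero => exact hb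
  | succ k ih =>
    refine Or.inr ⟨hR 0 (Nat.succ_pos _), ih _ ?_ ?_⟩
    · intro i hi
      exact hR (i+1) (by omega)
    · exact hb

lemma step_m (G : SimpleGraph (Fin n)) (s : St n) :
    s.m ≤ (step G s).m ∧ (step G s).m ≤ s.m + 1 ∧ (s.m < (step G s).m → s.Q = ∅) ∧
      s.D ⊆ (step G s).D := by
  unfold step
  split_ifs with h
  · simp
  · rw [Finset.not_nonempty_iff_eq_empty] at h
    cases hl : s.l with
    | nil => simp [stepRoot]
    | cons v l =>
      simp only [stepRoot]
      split_ifs <;> simp [h]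

lemma iter_mono (G : SimpleGraph (Fin n)) (s : St n) {i j : ℕ} (hij : i ≤ j) :
    ((step G)^[i] s).m ≤ ((step G)^[j] s).m ∧ ((step G)^[i] s).D ⊆ ((step G)^[j] s).D := by
  induction j, hij using Nat.le_induction with
  | base => exact ⟨le_rfl, subset_rfl⟩
  | succ j _ ih =>
    rw [Function.iterate_succ_apply']
    have := step_m G ((step G)^[j] s)
    exact ⟨ih.1.trans this.1, ih.2.trans this.2.2.2⟩

lemma not_bad_of_not_hit (G : SimpleGraph (Fin n))
    (Bad : Finset (Fin n) → Finset (Fin n) → ℕ → Prop) (M : ℝ) (s : St n)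
    (h : ∀ k, ¬ hit G Bad (fun _ _ m => (m : ℝ) ≤ M) k s) (k : ℕ)
    (hk : (((step G)^[k] s).m : ℝ) ≤ M) :
    ¬ Bad ((step G)^[k] s).D ((step G)^[k] s).Q ((step G)^[k] s).m := by
  intro hb
  refine h k (hit_of_bad G Bad _ k s ?_ hb)
  intro i hi
  have : (((step G)^[i] s).m : ℝ) ≤ ((step G)^[k] s).m := by
    exact_mod_cast (iter_mono G s hi.le).1
  exact this.trans hk

lemma exists_crossing (G : SimpleGraph (Fin n)) (M : ℝ) (s : St n) (h0 : (s.m : ℝ) ≤ M) (k : ℕ)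
    (hk : M < ((step G)^[k] s).m) :
    ∃ j < k, ((step G)^[j] s).Q = ∅ ∧ (((step G)^[j] s).m : ℝ) ≤ M ∧
      M < ((step G)^[j] s).m + 1 ∧ ((step G)^[j] s).D ⊆ ((step G)^[k] s).D := by
  have hex : ∃ k, M < ((step G)^[k] s).m := ⟨k, hk⟩
  have hmin := Nat.find_spec hex
  have hle : Nat.find hex ≤ k := Nat.find_min' hex hk
  have hpos : Nat.find hex ≠ 0 := by
    intro h
    rw [h] at hmin
    simp only [Function.iterate_zero, id] at hmin
    linarith
  obtain ⟨j, hj⟩ := Nat.exists_eq_succ_of_ne_zero hpos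
  have hlt : ¬ M < ((step G)^[j] s).m := Nat.find_min hex (by omega)
  rw [hj, Nat.succ_eq_add_one, Function.iterate_succ_apply'] at hmin
  push Not at hlt
  have hs := step_m G ((step G)^[j] s)
  have h1 : (((step G)^[j] s).m : ℝ) < ((step G ((step G)^[j] s)).m : ℝ) := by linarith
  have h2 : ((step G ((step G)^[j] s)).m : ℝ) ≤ ((step G)^[j] s).m + 1 := by
    exact_mod_cast hs.2.1
  exact ⟨j, by omega, hs.2.2.1 (by exact_mod_cast h1), hlt, by linarith,
    (iter_mono G s (by omega)).2⟩

noncomputable def cset (G : SimpleGraph (Fin n)) (v : Fin n) : Finset (Fin n) :=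
  Finset.univ.filter fun u => G.connectedComponentMk u = G.connectedComponentMk v

lemma comp_explore_aux (G : SimpleGraph (Fin n)) (S0 : Finset (Fin n)) (v : Fin n)
    (hS0 : ∀ a ∈ S0, ∀ b, G.Adj a b → b ∈ S0) (hv : v ∉ S0) (l : List (Fin n)) (m r : ℕ)
    (D Q : Finset (Fin n)) (hr : Dᶜ.card = r) (hd : Disjoint D Q) (hSD : S0 ⊆ D)
    (hvDQ : v ∈ D ∪ Q) (hsub : D ∪ Q ⊆ S0 ∪ cset G v)
    (hcl : ∀ a ∈ D, ∀ b, G.Adj a b → b ∈ D ∪ Q) :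
    ∃ j, (step G)^[j] ⟨l, D, Q, m⟩ = ⟨l, S0 ∪ cset G v, ∅, m⟩ := by
  induction r using Nat.strong_induction_on generalizing D Q with
  | _ r ih =>
    by_cases hQ : Q.Nonempty
    · set x := Q.min' hQ with hxdef
      have hx : x ∈ Q := Finset.min'_mem Q hQ
      have hxD : x ∉ D := Finset.disjoint_right.1 hd hx
      have hxS : x ∉ S0 := fun h => hxD (hSD h)
      have hxc : G.connectedComponentMk x = G.connectedComponentMk v := by
        have := hsub (Finset.mem_union_right _ hx)
        rw [Finset.mem_union] at this
        rcases this with h | h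
        · exact absurd h hxS
        · simpa [cset] using h
      have hunion : insert x D ∪ (Q.erase x ∪ nb G D Q x) = (D ∪ Q) ∪ nb G D Q x := by
        ext u
        simp only [Finset.mem_union, Finset.mem_insert, Finset.mem_erase]
        by_cases hux : u = x
        · subst hux; simp [hx]
        · simp [hux]; tauto
      have hst : step G ⟨l, D, Q, m⟩ = ⟨l, insert x D, Q.erase x ∪ nb G D Q x, m⟩ := by
        simp only [step, hQ, dif_pos, ← hxdef]
      obtain ⟨j, hj⟩ := ih (insert x D)ᶜ.card (by
          rw [← hr]
          apply Finset.card_lt_card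
          rw [Finset.ssubset_iff_of_subset]
          · exact ⟨x, by simpa using hxD, by simp⟩
          · intro u hu
            simp at hu ⊢
            exact hu.2) (insert x D) (Q.erase x ∪ nb G D Q x) rfl
          (new_disjoint hd hx (nb_disjoint _ _ _ _))
          (hSD.trans (Finset.subset_insert _ _))
          (by rw [hunion]; exact Finset.mem_union_left _ hvDQ)
          (by
            rw [hunion]
            refine Finset.union_subset hsub ?_
            intro u hu
            simp only [nb, Finset.mem_filter, Finset.mem_univ, true_and] at hu
            refine Finset.mem_union_right _ ?_
            simp only [cset, Finset.mem_filter, Finset.mem_univ, true_and]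
            rw [← hxc]
            exact (SimpleGraph.ConnectedComponent.sound hu.2.reachable).symm)
          (by
            intro a ha b hab
            rw [hunion]
            rw [Finset.mem_insert] at ha
            rcases ha with rfl | ha
            · by_cases hb : b ∈ D ∪ Q
              · exact Finset.mem_union_left _ hb
              · refine Finset.mem_union_right _ ?_
                simp only [nb, Finset.mem_filter, Finset.mem_univ, true_and]
                exact ⟨hb, hab⟩
            · exact Finset.mem_union_left _ (hcl a ha b hab))
      refine ⟨j + 1, ?_⟩
      rw [Function.iterate_succ_apply, hst]
      exact hj
    · rw [Finset.not_nonempty_iff_eq_empty] at hQ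
      subst hQ
      simp only [Finset.union_empty] at hvDQ hsub hcl
      refine ⟨0, ?_⟩
      have : D = S0 ∪ cset G v := by
        refine Finset.Subset.antisymm hsub (Finset.union_subset hSD ?_)
        intro u hu
        simp only [cset, Finset.mem_filter, Finset.mem_univ, true_and] at hu
        have hreach : G.Reachable v u := SimpleGraph.ConnectedComponent.exact hu.symm
        obtain ⟨p⟩ := hreach
        clear hu hv hsub ih
        induction p with
        | nil => exact hvDQ
        | cons h p ihp => exact ihp (hcl _ hvDQ _ h)
      simp [this]

lemma comp_explore (G : SimpleGraph (Fin n)) (S0 : Finset (Fin n)) (v : Fin n)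
    (hS0 : ∀ a ∈ S0, ∀ b, G.Adj a b → b ∈ S0) (hv : v ∉ S0) (l : List (Fin n)) (m : ℕ) :
    ∃ j, (step G)^[j] ⟨l, S0, {v}, m⟩ = ⟨l, S0 ∪ cset G v, ∅, m⟩ := by
  refine comp_explore_aux G S0 v hS0 hv l m _ S0 {v} rfl (by simpa using hv) subset_rfl (by simp)
    ?_ ?_
  · refine Finset.union_subset_union_right ?_
    intro u hu
    simp only [Finset.mem_singleton] at hu
    simp [cset, hu]
  · intro a ha b hab
    exact Finset.mem_union_left _ (hS0 a ha b hab)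

noncomputable def Dset (G : SimpleGraph (Fin n)) (vord : Fin n → Fin n) (pos : ℕ) :
    Finset (Fin n) :=
  Finset.univ.filter fun u => firstIdx G vord (G.connectedComponentMk u) < pos

lemma Dset_closed (G : SimpleGraph (Fin n)) (vord : Fin n → Fin n) (pos : ℕ) :
    ∀ a ∈ Dset G vord pos, ∀ b, G.Adj a b → b ∈ Dset G vord pos := by
  intro a ha b hab
  simp only [Dset, Finset.mem_filter, Finset.mem_univ, true_and] at ha ⊢
  rw [← SimpleGraph.ConnectedComponent.sound hab.reachable]
  exact ha

lemma firstIdx_spec (G : SimpleGraph (Fin n)) {vord : Fin n → Fin n}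
    (hs : Function.Surjective vord) (c : G.ConnectedComponent) :
    ∃ h : firstIdx G vord c < n, G.connectedComponentMk (vord ⟨firstIdx G vord c, h⟩) = c := by
  have hne : {i : ℕ | ∃ h : i < n, G.connectedComponentMk (vord ⟨i, h⟩) = c}.Nonempty := by
    induction c using SimpleGraph.ConnectedComponent.ind with
    | h v =>
      obtain ⟨i, rfl⟩ := hs v
      exact ⟨i, i.2, rfl⟩
  exact Nat.sInf_mem hne

lemma root_step (G : SimpleGraph (Fin n)) {vord : Fin n → Fin n}
    (hs : Function.Surjective vord) (pos : ℕ) (hpos : pos < n) (m : ℕ)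
    (hv : vord ⟨pos, hpos⟩ ∉ Dset G vord pos) :
    Dset G vord (pos + 1) = Dset G vord pos ∪ cset G (vord ⟨pos, hpos⟩) ∧
    ∃ j, (step G)^[j] ⟨(List.ofFn vord).drop pos, Dset G vord pos, ∅, m⟩
      = ⟨(List.ofFn vord).drop (pos + 1), Dset G vord (pos + 1), ∅, m + 1⟩ := by
  have hle : firstIdx G vord (G.connectedComponentMk (vord ⟨pos, hpos⟩)) ≤ pos :=
    Nat.sInf_le ⟨hpos, rfl⟩
  have heq : firstIdx G vord (G.connectedComponentMk (vord ⟨pos, hpos⟩)) = pos := by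
    simp only [Dset, Finset.mem_filter, Finset.mem_univ, true_and] at hv
    omega
  have hD : Dset G vord (pos + 1) = Dset G vord pos ∪ cset G (vord ⟨pos, hpos⟩) := by
    ext u
    simp only [Dset, cset, Finset.mem_filter, Finset.mem_univ, true_and, Finset.mem_union]
    constructor
    · intro h
      by_cases h' : firstIdx G vord (G.connectedComponentMk u) < pos
      · exact Or.inl h'
      · right
        have h2 : firstIdx G vord (G.connectedComponentMk u) = pos := by omega
        obtain ⟨h3, h4⟩ := firstIdx_spec G hs (G.connectedComponentMk u)
        rw [← h4]
        congr 3
    · rintro (h | h)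
      · omega
      · rw [h]; omega
  refine ⟨hD, ?_⟩
  obtain ⟨j, hj⟩ := comp_explore G (Dset G vord pos) (vord ⟨pos, hpos⟩) (Dset_closed G vord pos) hv
    ((List.ofFn vord).drop (pos + 1)) (m + 1)
  refine ⟨j + 1, ?_⟩
  have hdrop : (List.ofFn vord).drop pos = vord ⟨pos, hpos⟩ :: (List.ofFn vord).drop (pos + 1) := by
    rw [List.drop_eq_getElem_cons (by simpa using hpos)]
    simp
  rw [Function.iterate_succ_apply, hD, ← hj]
  congr 1
  rw [hdrop]
  simp [step, stepRoot, hv]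

lemma epoch (G : SimpleGraph (Fin n)) {vord : Fin n → Fin n}
    (hs : Function.Surjective vord) (pos : ℕ) (hpos : pos ≤ n) :
    ∃ k m, (step G)^[k] ⟨List.ofFn vord, ∅, ∅, 0⟩
      = ⟨(List.ofFn vord).drop pos, Dset G vord pos, ∅, m⟩ := by
  induction pos with
  | zero => exact ⟨0, 0, by simp [Dset]⟩
  | succ pos ih =>
    obtain ⟨k, m, hk⟩ := ih (by omega)
    have hlt : pos < n := by omega
    by_cases hv : vord ⟨pos, hlt⟩ ∈ Dset G vord pos
    · refine ⟨k + 1, m, ?_⟩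
      rw [Function.iterate_succ_apply', hk]
      have hdrop : (List.ofFn vord).drop pos
          = vord ⟨pos, hlt⟩ :: (List.ofFn vord).drop (pos + 1) := by
        rw [List.drop_eq_getElem_cons (by simpa using hlt)]
        simp
      have hD : Dset G vord (pos + 1) = Dset G vord pos := by
        ext u
        simp only [Dset, Finset.mem_filter, Finset.mem_univ, true_and] at hv ⊢
        constructor
        · intro h
          by_contra h'
          have h2 : firstIdx G vord (G.connectedComponentMk u) = pos := by omega
          obtain ⟨h3, h4⟩ := firstIdx_spec G hs (G.connectedComponentMk u)
          have h5 : G.connectedComponentMk (vord ⟨pos, hlt⟩) = G.connectedComponentMk u := by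
            rw [← h4]
            congr 3
            exact h2.symm
          rw [h5] at hv
          omega
        · omega
      rw [hdrop, hD]
      simp [step, stepRoot, hv]
    · obtain ⟨_, j, hj⟩ := root_step G hs pos hlt m hv
      refine ⟨j + k, m + 1, ?_⟩
      rw [Function.iterate_add_apply, hk, hj]

lemma comp_epochs (G : SimpleGraph (Fin n)) {vord : Fin n → Fin n}
    (hs : Function.Surjective vord) (c : G.ConnectedComponent) :
    ∃ k k' m l l' D D', (step G)^[k] ⟨List.ofFn vord, ∅, ∅, 0⟩ = ⟨l, D, ∅, m⟩ ∧
      (step G)^[k'] ⟨List.ofFn vord, ∅, ∅, 0⟩ = ⟨l', D', ∅, m + 1⟩ ∧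
      D.card = startT G vord c ∧ D'.card = startT G vord c + csize G c := by
  obtain ⟨hlt, hc⟩ := firstIdx_spec G hs c
  obtain ⟨k, m, hk⟩ := epoch G hs (firstIdx G vord c) hlt.le
  have hv : vord ⟨firstIdx G vord c, hlt⟩ ∉ Dset G vord (firstIdx G vord c) := by
    simp [Dset, hc]
  obtain ⟨hD, j, hj⟩ := root_step G hs _ hlt m hv
  refine ⟨k, j + k, m, _, (List.ofFn vord).drop (firstIdx G vord c + 1), _,
    Dset G vord (firstIdx G vord c + 1), hk, ?_, ?_, ?_⟩
  · rw [Function.iterate_add_apply, hk, hj]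
  · simp [startT, Dset]
  · rw [hD, Finset.card_union_of_disjoint]
    · congr 1
      · simp [startT, Dset]
      · simp [csize, cset, hc, Fintype.card_subtype]
    · rw [Finset.disjoint_left]
      intro u hu hu'
      simp only [Dset, cset, Finset.mem_filter, Finset.mem_univ, true_and, hc] at hu hu'
      rw [hu'] at hu
      omega

end det

lemma expMeasure_nonsurj {n : ℕ} (w : Fin n → ℝ) (p : ℝ) :
    expMeasure' n w p {ω | ¬ Function.Surjective ω.2} = 0 := by
  unfold expMeasure'
  rw [Measure.sum_apply _ (Set.toFinite _).measurableSet, tsum_fintype]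
  refine Finset.sum_eq_zero fun σ _ => ?_
  rw [Measure.smul_apply, Measure.map_apply (measurable_of_countable _)
      (Set.toFinite _).measurableSet]
  have : (fun g : Fin n → Fin n → Bool => (g, ⇑σ)) ⁻¹' {ω | ¬ Function.Surjective ω.2} = ∅ := by
    ext g
    simp [σ.surjective]
  rw [this]
  simp

/-! ### Exponential potentials -/

section pot
variable {n : ℕ}

noncomputable def pexp (w φ : Fin n → ℝ) (g : ℝ → ℝ) (c : ℝ) (D Q : Finset (Fin n)) (m : ℕ) : ℝ :=
  ∑ u ∈ D ∪ Q, φ u + g (∑ u ∈ D, w u) - c * m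

noncomputable def pot (w φ : Fin n → ℝ) (g : ℝ → ℝ) (c x0 : ℝ) (D Q : Finset (Fin n)) (m : ℕ) :
    ℝ := Real.exp (pexp w φ g c D Q m - x0)

lemma pot_explore {w φ : Fin n → ℝ} {g : ℝ → ℝ} {c x0 p : ℝ} (hw : ∀ i, 0 < w i) (hp : 0 ≤ p)
    {D Q : Finset (Fin n)} {m : ℕ} (hd : Disjoint D Q) {x : Fin n} (hx : x ∈ Q)
    (h : ∑ u ∈ (D ∪ Q)ᶜ, (Real.exp (φ u) - 1) * (1 - Real.exp (-(w x * w u * p)))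
      + (g (∑ u ∈ D, w u + w x) - g (∑ u ∈ D, w u)) ≤ 0) :
    ∑ N ∈ (D ∪ Q)ᶜ.powerset, ((∏ u ∈ N, (1 - Real.exp (-(w x * w u * p)))) *
        ∏ u ∈ (D ∪ Q)ᶜ \ N, (1 - (1 - Real.exp (-(w x * w u * p))))) *
        pot w φ g c x0 (insert x D) (Q.erase x ∪ N) m ≤ pot w φ g c x0 D Q m := by
  have hxD : x ∉ D := Finset.disjoint_right.1 hd hx
  set B := ∑ u ∈ D ∪ Q, φ u + g (∑ u ∈ D, w u + w x) - c * m - x0 with hB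
  have hterm : ∀ N ∈ (D ∪ Q)ᶜ.powerset, ((∏ u ∈ N, (1 - Real.exp (-(w x * w u * p)))) *
        ∏ u ∈ (D ∪ Q)ᶜ \ N, (1 - (1 - Real.exp (-(w x * w u * p))))) *
        pot w φ g c x0 (insert x D) (Q.erase x ∪ N) m
      = ((∏ u ∈ N, (1 - Real.exp (-(w x * w u * p))) * Real.exp (φ u)) *
        ∏ u ∈ (D ∪ Q)ᶜ \ N, (1 - (1 - Real.exp (-(w x * w u * p))))) * Real.exp B := by
    intro N hN
    rw [Finset.mem_powerset] at hN
    have hunion : insert x D ∪ (Q.erase x ∪ N) = (D ∪ Q) ∪ N := by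
      ext u
      simp only [Finset.mem_union, Finset.mem_insert, Finset.mem_erase]
      by_cases hux : u = x
      · subst hux; simp [hx]
      · simp [hux]; tauto
    have hdis : Disjoint (D ∪ Q) N := by
      rw [Finset.disjoint_right]
      intro u hu
      have := hN hu
      simpa using this
    have : pot w φ g c x0 (insert x D) (Q.erase x ∪ N) m
        = (∏ u ∈ N, Real.exp (φ u)) * Real.exp B := by
      unfold pot pexp
      rw [hunion, Finset.sum_union hdis, Finset.sum_insert hxD, ← Real.exp_sum, ← Real.exp_add, hB]
      congr 1
      rw [add_comm (w x)]
      ring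
    rw [this, Finset.prod_mul_distrib]
    ring
  rw [Finset.sum_congr rfl hterm, ← Finset.sum_mul, ← Finset.prod_add]
  have hprod : ∏ u ∈ (D ∪ Q)ᶜ, ((1 - Real.exp (-(w x * w u * p))) * Real.exp (φ u)
      + (1 - (1 - Real.exp (-(w x * w u * p)))))
      ≤ Real.exp (∑ u ∈ (D ∪ Q)ᶜ, (Real.exp (φ u) - 1) * (1 - Real.exp (-(w x * w u * p)))) := by
    rw [Real.exp_sum]
    refine Finset.prod_le_prod ?_ ?_
    · intro u _
      have h1 : Real.exp (-(w x * w u * p)) ≤ 1 := by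
        rw [Real.exp_le_one_iff]
        have := mul_nonneg (mul_nonneg (hw x).le (hw u).le) hp
        linarith
      have h2 := Real.exp_pos (-(w x * w u * p))
      have h3 := Real.exp_pos (φ u)
      have : 0 ≤ (1 - Real.exp (-(w x * w u * p))) * Real.exp (φ u) :=
        mul_nonneg (by linarith) h3.le
      linarith
    · intro u _
      have := Real.add_one_le_exp ((Real.exp (φ u) - 1) * (1 - Real.exp (-(w x * w u * p))))
      linarith
  calc _ ≤ Real.exp (∑ u ∈ (D ∪ Q)ᶜ, (Real.exp (φ u) - 1) * (1 - Real.exp (-(w x * w u * p))))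
      * Real.exp B := mul_le_mul_of_nonneg_right hprod (Real.exp_pos _).le
    _ = Real.exp (∑ u ∈ (D ∪ Q)ᶜ, (Real.exp (φ u) - 1) * (1 - Real.exp (-(w x * w u * p))) + B) := by
      rw [Real.exp_add]
    _ ≤ _ := by
      unfold pot pexp
      apply Real.exp_le_exp.2
      rw [hB]
      linarith

lemma pot_root {w φ : Fin n → ℝ} {g : ℝ → ℝ} {c x0 : ℝ} {D : Finset (Fin n)} {m : ℕ}
    (h : ∑ v ∈ Dᶜ, w v * Real.exp (φ v) ≤ Real.exp c * ∑ v ∈ Dᶜ, w v) :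
    ∑ v ∈ Dᶜ, w v * pot w φ g c x0 D {v} (m + 1) ≤ (∑ v ∈ Dᶜ, w v) * pot w φ g c x0 D ∅ m := by
  have hterm : ∀ v ∈ Dᶜ, w v * pot w φ g c x0 D {v} (m + 1)
      = (w v * Real.exp (φ v)) * (Real.exp (-c) * pot w φ g c x0 D ∅ m) := by
    intro v hv
    have hv' : v ∉ D := by simpa using hv
    unfold pot pexp
    rw [Finset.sum_union (by simpa using hv'), Finset.sum_singleton, Finset.union_empty, mul_assoc,
      ← Real.exp_add, ← Real.exp_add]
    congr 2
    push_cast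
    ring
  rw [Finset.sum_congr rfl hterm, ← Finset.sum_mul]
  have hpos : 0 ≤ Real.exp (-c) * pot w φ g c x0 D ∅ m := by unfold pot; positivity
  refine (mul_le_mul_of_nonneg_right h hpos).trans (le_of_eq ?_)
  have : Real.exp c * Real.exp (-c) = 1 := by rw [← Real.exp_add]; simp
  linear_combination (∑ v ∈ Dᶜ, w v) * pot w φ g c x0 D ∅ m * this

/-- elementary exponential bounds -/
lemma exp_sub_one_le {z : ℝ} (h0 : 0 ≤ z) (h1 : z ≤ 1) : Real.exp z - 1 ≤ z + z ^ 2 := by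
  have := Real.abs_exp_sub_one_sub_id_le (x := z) (by rw [abs_of_nonneg h0]; exact h1)
  have := (abs_le.1 this).2
  linarith

lemma exp_neg_le_quad {z : ℝ} (h0 : 0 ≤ z) : Real.exp (-z) ≤ 1 - z + z ^ 2 / 2 := by
  have h := Real.quadratic_le_exp_of_nonneg h0
  have h3 : 0 < Real.exp z := Real.exp_pos z
  rw [Real.exp_neg, inv_le_iff_one_le_mul₀ h3]
  have h2 : 0 ≤ 1 - z + z ^ 2 / 2 := by nlinarith [sq_nonneg (z - 1)]
  calc (1:ℝ) ≤ (1 - z + z ^ 2 / 2) * (1 + z + z ^ 2 / 2) := by nlinarith [sq_nonneg (z ^ 2)]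
    _ ≤ _ := mul_le_mul_of_nonneg_left h h2

lemma one_sub_exp_neg_le (z : ℝ) : 1 - Real.exp (-z) ≤ z := by
  have := Real.add_one_le_exp (-z)
  linarith

/-- Parameters for the finite-size estimates. -/
structure FH (n : ℕ) (w : Fin n → ℝ) (y f C η K δ : ℝ) : Prop where
  w_pos : ∀ i, 0 < w i
  y1 : 1 ≤ y
  C0 : 0 < C
  η0 : 0 < η
  η1 : η ≤ 1 / 100
  δ0 : 0 < δ
  δη : δ ≤ η / 4
  s1 : ∑ i, w i = y ^ 3
  s2u : ∑ i, w i ^ 2 ≤ y ^ 3 + η * y ^ 2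
  s2l : y ^ 3 - η * y ^ 2 ≤ ∑ i, w i ^ 2
  s3 : ∑ i, w i ^ 3 ≤ C * (1 + η) * y ^ 3
  s3K : C * (1 - η) * y ^ 3 ≤ ∑ i ∈ Finset.univ.filter (fun i => w i ≤ K), w i ^ 3
  wmax : ∀ i, w i ≤ δ * y
  f1 : 1 ≤ f
  fδ : f ≤ δ * y
  fF : η + 2 * C ≤ η * f
  yη : 4 ≤ η * y
  yC : 16 * C ≤ η * y

noncomputable def pp (y f : ℝ) : ℝ := (y + f) / y ^ 4

section FHs
variable {w : Fin n → ℝ} {y f C η K δ : ℝ}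

lemma FH.y0 (H : FH n w y f C η K δ) : 0 < y := by linarith [H.y1]
lemma FH.K0 (H : FH n w y f C η K δ) : 0 < K := by
  by_contra hK
  have h := H.s3K
  have : Finset.univ.filter (fun i => w i ≤ K) = ∅ := by
    ext i
    have := H.w_pos i
    simp
    linarith
  rw [this, Finset.sum_empty] at h
  have h1 := H.y0
  have h2 := H.C0
  have h3 := H.η1
  have : 0 < C * (1 - η) * y ^ 3 := by
    have : 0 < 1 - η := by linarith
    positivity
  linarith

lemma FH.p_eq (H : FH n w y f C η K δ) : pp y f * y ^ 3 = 1 + f / y := by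
  have := H.y0
  unfold pp
  field_simp

lemma FH.a_le (H : FH n w y f C η K δ) : 0 < f / y ∧ f / y ≤ δ := by
  have := H.y0
  have h1 := H.f1
  refine ⟨by positivity, ?_⟩
  rw [div_le_iff₀ this]
  exact H.fδ

lemma FH.p0 (H : FH n w y f C η K δ) : 0 ≤ pp y f := by
  have := H.y0
  have h1 := H.f1
  unfold pp
  positivity

lemma FH.wxp (H : FH n w y f C η K δ) (x : Fin n) : w x * pp y f * y ≤ 1 := by
  have hy := H.y0
  have h1 := H.p_eq
  have h2 := H.a_le
  have h3 := H.wmax x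
  have h4 := H.δη
  have h5 := H.η1
  have h6 := H.p0
  have h7 := H.y1
  have h8 := H.δ0
  calc w x * pp y f * y ≤ (δ * y) * pp y f * y := by gcongr
    _ = δ * (pp y f * y ^ 2) := by ring
    _ ≤ δ * (pp y f * y ^ 3) := by
      gcongr
      · norm_num
    _ = δ * (1 + f / y) := by rw [h1]
    _ ≤ 1 := by nlinarith

/-- Lower bound on the edge probability. -/
lemma FH.q_lb (H : FH n w y f C η K δ) (x u : Fin n) :
    w x * pp y f * (w u * (1 - w u / (2 * y))) ≤ 1 - Real.exp (-(w x * w u * pp y f)) := by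
  have hy := H.y0
  have hx := H.w_pos x
  have hu := H.w_pos u
  have hp := H.p0
  have h1 := exp_neg_le_quad (z := w x * w u * pp y f) (by positivity)
  have h2 := H.wxp x
  have h3 : w x * pp y f ≤ 1 / y := by rw [le_div_iff₀ hy]; exact h2
  have h4 : (w x * w u * pp y f) ^ 2 / 2 ≤ w x * pp y f * w u * (w u / (2 * y)) := by
    have : (w x * w u * pp y f) ^ 2 / 2 = (w x * pp y f * w u * (w u / 2)) * (w x * pp y f) := by
      ring
    rw [this]
    have : w x * pp y f * w u * (w u / (2 * y)) = (w x * pp y f * w u * (w u / 2)) * (1 / y) := by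
      field_simp
    rw [this]
    gcongr
  nlinarith

lemma FH.q_ub (_H : FH n w y f C η K δ) (x u : Fin n) :
    1 - Real.exp (-(w x * w u * pp y f)) ≤ w x * pp y f * w u := by
  have := one_sub_exp_neg_le (w x * w u * pp y f)
  linarith

lemma FH.q_nn (H : FH n w y f C η K δ) (x u : Fin n) :
    0 ≤ 1 - Real.exp (-(w x * w u * pp y f)) := by
  have hp := H.p0
  have : Real.exp (-(w x * w u * pp y f)) ≤ 1 := by
    rw [Real.exp_le_one_iff]
    have := mul_nonneg (mul_nonneg (H.w_pos x).le (H.w_pos u).le) hp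
    linarith
  linarith

end FHs
end pot

section six
variable {n : ℕ} {w : Fin n → ℝ} {y f C η K δ : ℝ}

lemma sum_compl_le (h : Fin n → ℝ) (hh : ∀ i, 0 ≤ h i) (P : Finset (Fin n)) :
    ∑ u ∈ Pᶜ, h u ≤ ∑ u, h u :=
  Finset.sum_le_sum_of_subset_of_nonneg (Finset.subset_univ _) fun i _ _ => hh i

lemma sum_compl_eq (h : Fin n → ℝ) (P : Finset (Fin n)) :
    ∑ u ∈ Pᶜ, h u = ∑ u, h u - ∑ u ∈ P, h u := by
  rw [← Finset.sum_add_sum_compl P h]; ring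

/-- potential (A) -/
lemma FH.A_explore (H : FH n w y f C η K δ) (P : Finset (Fin n)) (x : Fin n) (t : ℝ) :
    ∑ u ∈ Pᶜ, (Real.exp (w u ^ 2 / y ^ 2) - 1) * (1 - Real.exp (-(w x * w u * pp y f)))
      + (-(C * (1 + 4 * η) / y ^ 2) * (t + w x) - -(C * (1 + 4 * η) / y ^ 2) * t) ≤ 0 := by
  have hy := H.y0
  have hp := H.p0
  have hx := H.w_pos x
  have hδ := H.δ0
  have hC := H.C0
  have hη := H.η0
  have hη1 := H.η1
  have hδη := H.δη
  have ha := H.a_le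
  have hterm : ∀ u ∈ Pᶜ, (Real.exp (w u ^ 2 / y ^ 2) - 1) * (1 - Real.exp (-(w x * w u * pp y f)))
      ≤ (w x * pp y f * (1 + δ) / y ^ 2) * w u ^ 3 := by
    intro u _
    have hu := H.w_pos u
    have h1 : w u / y ≤ δ := by rw [div_le_iff₀ hy]; exact H.wmax u
    have h0 : 0 < w u / y := by positivity
    have h2 : w u ^ 2 / y ^ 2 = (w u / y) ^ 2 := by ring
    have h3 : (w u / y) ^ 2 ≤ δ := by nlinarith
    have h4 := exp_sub_one_le (z := w u ^ 2 / y ^ 2) (by positivity) (by rw [h2]; linarith)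
    have h5 : Real.exp (w u ^ 2 / y ^ 2) - 1 ≤ (w u ^ 2 / y ^ 2) * (1 + δ) := by
      refine h4.trans ?_
      have : 0 ≤ w u ^ 2 / y ^ 2 := by positivity
      have : w u ^ 2 / y ^ 2 * (w u ^ 2 / y ^ 2) ≤ w u ^ 2 / y ^ 2 * δ := by
        gcongr
        rw [h2]; exact h3
      nlinarith
    calc _ ≤ ((w u ^ 2 / y ^ 2) * (1 + δ)) * (w x * pp y f * w u) := by
          gcongr
          · exact H.q_nn x u
          · exact H.q_ub x u
      _ = _ := by ring
  have hsum := Finset.sum_le_sum hterm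
  rw [← Finset.mul_sum] at hsum
  have h3 := (sum_compl_le (fun u => w u ^ 3) (fun i => by have := H.w_pos i; positivity) P).trans H.s3
  have h4 : (w x * pp y f * (1 + δ) / y ^ 2) * ∑ u ∈ Pᶜ, w u ^ 3
      ≤ (w x * pp y f * (1 + δ) / y ^ 2) * (C * (1 + η) * y ^ 3) := by gcongr
  have h5 : (w x * pp y f * (1 + δ) / y ^ 2) * (C * (1 + η) * y ^ 3)
      = (C / y ^ 2 * w x) * ((1 + f / y) * (1 + δ) * (1 + η)) := by
    rw [← H.p_eq]; ring
  have h6 : (1 + f / y) * (1 + δ) * (1 + η) ≤ 1 + 4 * η := by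
    have : (1 + f / y) * (1 + δ) ≤ 1 + η := by nlinarith
    nlinarith
  have h7 : (C / y ^ 2 * w x) * ((1 + f / y) * (1 + δ) * (1 + η))
      ≤ (C / y ^ 2 * w x) * (1 + 4 * η) := by gcongr
  have h8 : -(C * (1 + 4 * η) / y ^ 2) * (t + w x) - -(C * (1 + 4 * η) / y ^ 2) * t
      = -((C / y ^ 2 * w x) * (1 + 4 * η)) := by ring
  rw [h8]
  linarith

lemma FH.A_root (H : FH n w y f C η K δ) (D : Finset (Fin n)) (ht : ∑ u ∈ D, w u ≤ y ^ 3 / 2) :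
    ∑ v ∈ Dᶜ, w v * Real.exp (w v ^ 2 / y ^ 2) ≤ Real.exp (8 * C / y ^ 2) * ∑ v ∈ Dᶜ, w v := by
  have hy := H.y0
  have hδ := H.δ0
  have hC := H.C0
  have hη := H.η0
  have hη1 := H.η1
  have hδη := H.δη
  have hU : y ^ 3 / 2 ≤ ∑ v ∈ Dᶜ, w v := by rw [sum_compl_eq, H.s1]; linarith
  have hterm : ∀ u ∈ Dᶜ, w u * Real.exp (w u ^ 2 / y ^ 2) ≤ w u + (2 / y ^ 2) * w u ^ 3 := by
    intro u _
    have hu := H.w_pos u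
    have h1 : w u / y ≤ δ := by rw [div_le_iff₀ hy]; exact H.wmax u
    have h0 : 0 < w u / y := by positivity
    have h2 : w u ^ 2 / y ^ 2 = (w u / y) ^ 2 := by ring
    have h3 : w u ^ 2 / y ^ 2 ≤ 1 := by rw [h2]; nlinarith
    have h00 : 0 ≤ w u ^ 2 / y ^ 2 := by positivity
    have h4 := exp_sub_one_le (z := w u ^ 2 / y ^ 2) h00 h3
    have h5 : Real.exp (w u ^ 2 / y ^ 2) ≤ 1 + 2 * (w u ^ 2 / y ^ 2) := by nlinarith
    calc _ ≤ w u * (1 + 2 * (w u ^ 2 / y ^ 2)) := by gcongr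
      _ = _ := by ring
  have hsum := Finset.sum_le_sum hterm
  rw [Finset.sum_add_distrib, ← Finset.mul_sum] at hsum
  have h3 := (sum_compl_le (fun u => w u ^ 3) (fun i => by have := H.w_pos i; positivity) D).trans H.s3
  have h4 : (2 / y ^ 2) * ∑ u ∈ Dᶜ, w u ^ 3 ≤ (2 / y ^ 2) * (C * (1 + η) * y ^ 3) := by gcongr
  have h5 : (2 / y ^ 2) * (C * (1 + η) * y ^ 3) ≤ 8 * C / y ^ 2 * (y ^ 3 / 2) := by
    have : (2 / y ^ 2) * (C * (1 + η) * y ^ 3) = (C / y ^ 2 * y ^ 3) * (2 * (1 + η)) := by ring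
    rw [this]
    have : 8 * C / y ^ 2 * (y ^ 3 / 2) = (C / y ^ 2 * y ^ 3) * 4 := by ring
    rw [this]
    gcongr
    linarith
  have h6 : 8 * C / y ^ 2 * (y ^ 3 / 2) ≤ 8 * C / y ^ 2 * ∑ v ∈ Dᶜ, w v := by gcongr
  have h7 : (8 * C / y ^ 2 + 1) * ∑ v ∈ Dᶜ, w v ≤ Real.exp (8 * C / y ^ 2) * ∑ v ∈ Dᶜ, w v := by
    have : 0 ≤ y ^ 3 / 2 := by positivity
    refine mul_le_mul_of_nonneg_right (Real.add_one_le_exp _) (by linarith)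
  linarith

/-- root inequality for nonpositive `φ`, `c = 0` -/
lemma root_nonpos (hw : ∀ i, 0 < w i) (φ : Fin n → ℝ) (hφ : ∀ i, φ i ≤ 0) (D : Finset (Fin n)) :
    ∑ v ∈ Dᶜ, w v * Real.exp (φ v) ≤ Real.exp 0 * ∑ v ∈ Dᶜ, w v := by
  rw [Real.exp_zero, one_mul]
  refine Finset.sum_le_sum fun v _ => ?_
  have h1 : Real.exp (φ v) ≤ 1 := Real.exp_le_one_iff.2 (hφ v)
  have := hw v
  nlinarith

/-- potential (B) -/
lemma FH.B_explore (H : FH n w y f C η K δ) (P : Finset (Fin n)) (x : Fin n) (t : ℝ)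
    (hP : K * ∑ u ∈ P, w u ^ 2 ≤ η * C * y ^ 3) :
    ∑ u ∈ Pᶜ, (Real.exp (if w u ≤ K then -(w u ^ 2 / y ^ 2) else 0) - 1) *
        (1 - Real.exp (-(w x * w u * pp y f)))
      + ((C * (1 - 4 * η) / y ^ 2) * (t + w x) - (C * (1 - 4 * η) / y ^ 2) * t) ≤ 0 := by
  have hy := H.y0
  have hp := H.p0
  have hx := H.w_pos x
  have hδ := H.δ0
  have hC := H.C0
  have hη := H.η0
  have hη1 := H.η1
  have hδη := H.δη
  have ha := H.a_le
  have hterm : ∀ u ∈ Pᶜ, (Real.exp (if w u ≤ K then -(w u ^ 2 / y ^ 2) else 0) - 1) *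
        (1 - Real.exp (-(w x * w u * pp y f)))
      ≤ -(w x * pp y f * (1 - δ) ^ 2 / y ^ 2) * (if w u ≤ K then w u ^ 3 else 0) := by
    intro u _
    have hu := H.w_pos u
    split_ifs with hK
    swap
    · simp
    have h1 : w u / y ≤ δ := by rw [div_le_iff₀ hy]; exact H.wmax u
    have h0 : 0 < w u / y := by positivity
    have h2 : w u ^ 2 / y ^ 2 = (w u / y) ^ 2 := by ring
    have h3 : (w u / y) ^ 2 ≤ δ := by nlinarith
    have h00 : 0 ≤ w u ^ 2 / y ^ 2 := by positivity
    have h4 := exp_neg_le_quad (z := w u ^ 2 / y ^ 2) h00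
    have h5 : (w u ^ 2 / y ^ 2) * (1 - δ) ≤ 1 - Real.exp (-(w u ^ 2 / y ^ 2)) := by
      have : w u ^ 2 / y ^ 2 * (w u ^ 2 / y ^ 2) ≤ w u ^ 2 / y ^ 2 * δ := by
        gcongr
        rw [h2]; exact h3
      nlinarith
    have h6 : w x * pp y f * (w u * (1 - δ)) ≤ 1 - Real.exp (-(w x * w u * pp y f)) := by
      refine le_trans ?_ (H.q_lb x u)
      gcongr
      have : w u / (2 * y) = (w u / y) / 2 := by field_simp
      rw [this]; linarith
    have h7 : ((w u ^ 2 / y ^ 2) * (1 - δ)) * (w x * pp y f * (w u * (1 - δ)))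
        ≤ (1 - Real.exp (-(w u ^ 2 / y ^ 2))) * (1 - Real.exp (-(w x * w u * pp y f))) := by
      have : 0 ≤ 1 - δ := by linarith
      have h8 : 0 ≤ w x * pp y f * (w u * (1 - δ)) := by positivity
      have h9 : 0 ≤ (w u ^ 2 / y ^ 2) * (1 - δ) := by positivity
      exact mul_le_mul h5 h6 h8 (by linarith)
    have h10 : -(w x * pp y f * (1 - δ) ^ 2 / y ^ 2) * w u ^ 3
      = -(((w u ^ 2 / y ^ 2) * (1 - δ)) * (w x * pp y f * (w u * (1 - δ)))) := by ring
    rw [h10]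
    linarith
  have hsum := Finset.sum_le_sum hterm
  rw [← Finset.mul_sum] at hsum
  have h3 : C * (1 - 2 * η) * y ^ 3 ≤ ∑ u ∈ Pᶜ, (if w u ≤ K then w u ^ 3 else 0) := by
    rw [sum_compl_eq]
    have e1 := H.s3K
    rw [Finset.sum_filter] at e1
    have e2 : ∑ u ∈ P, (if w u ≤ K then w u ^ 3 else 0) ≤ K * ∑ u ∈ P, w u ^ 2 := by
      rw [Finset.mul_sum]
      refine Finset.sum_le_sum fun u _ => ?_
      have hu := H.w_pos u
      have hK := H.K0
      split_ifs with h
      · calc w u ^ 3 = w u * w u ^ 2 := by ring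
          _ ≤ K * w u ^ 2 := by gcongr
      · positivity
    have : C * (1 - 2 * η) * y ^ 3 = C * (1 - η) * y ^ 3 - η * C * y ^ 3 := by ring
    linarith
  have h4 : (w x * pp y f * (1 - δ) ^ 2 / y ^ 2) * (C * (1 - 2 * η) * y ^ 3)
      ≤ (w x * pp y f * (1 - δ) ^ 2 / y ^ 2) * ∑ u ∈ Pᶜ, (if w u ≤ K then w u ^ 3 else 0) := by
    gcongr
  have h5 : (w x * pp y f * (1 - δ) ^ 2 / y ^ 2) * (C * (1 - 2 * η) * y ^ 3)
      = (C / y ^ 2 * w x) * ((1 + f / y) * ((1 - δ) ^ 2 * (1 - 2 * η))) := by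
    rw [← H.p_eq]; ring
  have h6 : 1 - 4 * η ≤ (1 + f / y) * ((1 - δ) ^ 2 * (1 - 2 * η)) := by
    have e1 : 1 - 2 * η ≤ (1 - δ) ^ 2 := by nlinarith
    have e2 : 1 - 4 * η ≤ (1 - δ) ^ 2 * (1 - 2 * η) := by nlinarith
    nlinarith
  have h7 : (C / y ^ 2 * w x) * (1 - 4 * η)
      ≤ (C / y ^ 2 * w x) * ((1 + f / y) * ((1 - δ) ^ 2 * (1 - 2 * η))) := by gcongr
  have h8 : (C * (1 - 4 * η) / y ^ 2) * (t + w x) - (C * (1 - 4 * η) / y ^ 2) * t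
      = ((C / y ^ 2 * w x) * (1 - 4 * η)) := by ring
  rw [h8]
  linarith

/-- potential (N+) -/
lemma FH.Np_explore (H : FH n w y f C η K δ) (P : Finset (Fin n)) (x : Fin n) (t : ℝ) :
    ∑ u ∈ Pᶜ, (Real.exp (1 / y) - 1) * (1 - Real.exp (-(w x * w u * pp y f)))
      + (-((1 + η) / y) * (t + w x) - -((1 + η) / y) * t) ≤ 0 := by
  have hy := H.y0
  have hp := H.p0
  have hx := H.w_pos x
  have hδ := H.δ0
  have hη := H.η0
  have hη1 := H.η1
  have hδη := H.δη
  have ha := H.a_le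
  have hy1 : 1 / y ≤ η / 4 := by
    rw [div_le_iff₀ hy]; linarith [H.yη]
  have hy2 : 0 < 1 / y := by positivity
  have h5 : Real.exp (1 / y) - 1 ≤ (1 / y) * (1 + η / 4) := by
    refine (exp_sub_one_le hy2.le (by linarith)).trans ?_
    nlinarith
  have hterm : ∀ u ∈ Pᶜ, (Real.exp (1 / y) - 1) * (1 - Real.exp (-(w x * w u * pp y f)))
      ≤ ((1 / y) * (1 + η / 4) * (w x * pp y f)) * w u := by
    intro u _
    calc _ ≤ ((1 / y) * (1 + η / 4)) * (w x * pp y f * w u) := by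
          gcongr
          · exact H.q_nn x u
          · exact H.q_ub x u
      _ = _ := by ring
  have hsum := Finset.sum_le_sum hterm
  rw [← Finset.mul_sum, ← Finset.mul_sum] at hsum
  have h3 := sum_compl_le w (fun i => (H.w_pos i).le) P
  rw [H.s1] at h3
  have h4 : ((1 / y) * (1 + η / 4) * (w x * pp y f)) * ∑ u ∈ Pᶜ, w u
      ≤ ((1 / y) * (1 + η / 4) * (w x * pp y f)) * y ^ 3 := by gcongr
  have h6 : ((1 / y) * (1 + η / 4) * (w x * pp y f)) * y ^ 3
      = (w x / y) * ((1 + f / y) * (1 + η / 4)) := by rw [← H.p_eq]; ring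
  have h7 : (w x / y) * ((1 + f / y) * (1 + η / 4)) ≤ (w x / y) * (1 + η) := by
    gcongr
    nlinarith
  have h8 : -((1 + η) / y) * (t + w x) - -((1 + η) / y) * t = - ((w x / y) * (1 + η)) := by ring
  rw [h8, ← Finset.mul_sum]
  linarith

lemma FH.Np_root (D : Finset (Fin n)) :
    ∑ v ∈ Dᶜ, w v * Real.exp (1 / y) ≤ Real.exp (1 / y) * ∑ v ∈ Dᶜ, w v := by
  rw [← Finset.sum_mul, mul_comm]

/-- potential (N−) -/
lemma FH.Nm_explore (H : FH n w y f C η K δ) (P : Finset (Fin n)) (x : Fin n) (t : ℝ)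
    (hP : ∑ u ∈ P, w u ≤ η * y ^ 3) :
    ∑ u ∈ Pᶜ, (Real.exp (-(1 / y)) - 1) * (1 - Real.exp (-(w x * w u * pp y f)))
      + (((1 - 4 * η) / y) * (t + w x) - ((1 - 4 * η) / y) * t) ≤ 0 := by
  have hy := H.y0
  have hp := H.p0
  have hx := H.w_pos x
  have hδ := H.δ0
  have hη := H.η0
  have hη1 := H.η1
  have hδη := H.δη
  have ha := H.a_le
  have hy1 : 1 / y ≤ η / 4 := by
    rw [div_le_iff₀ hy]; linarith [H.yη]
  have hy2 : 0 < 1 / y := by positivity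
  have h5 : (1 / y) * (1 - η) ≤ 1 - Real.exp (-(1 / y)) := by
    have := exp_neg_le_quad hy2.le
    nlinarith
  have hterm : ∀ u ∈ Pᶜ, (Real.exp (-(1 / y)) - 1) * (1 - Real.exp (-(w x * w u * pp y f)))
      ≤ -((1 / y) * (1 - η) * (w x * pp y f) * (1 - η)) * w u := by
    intro u _
    have hu := H.w_pos u
    have h1 : w u / y ≤ δ := by rw [div_le_iff₀ hy]; exact H.wmax u
    have h6 : w x * pp y f * (w u * (1 - η)) ≤ 1 - Real.exp (-(w x * w u * pp y f)) := by
      refine le_trans ?_ (H.q_lb x u)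
      gcongr
      have : w u / (2 * y) = (w u / y) / 2 := by field_simp
      rw [this]; linarith
    have : 0 ≤ 1 - η := by linarith
    have h7 : ((1 / y) * (1 - η)) * (w x * pp y f * (w u * (1 - η)))
        ≤ (1 - Real.exp (-(1 / y))) * (1 - Real.exp (-(w x * w u * pp y f))) := by
      have h8 : 0 ≤ w x * pp y f * (w u * (1 - η)) := by positivity
      have h9 : 0 ≤ (1 / y) * (1 - η) := by positivity
      exact mul_le_mul h5 h6 h8 (by linarith)
    linarith
  have hsum := Finset.sum_le_sum hterm
  rw [← Finset.mul_sum, ← Finset.mul_sum] at hsum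
  have h3 : y ^ 3 * (1 - η) ≤ ∑ u ∈ Pᶜ, w u := by
    rw [sum_compl_eq, H.s1]; linarith
  have : 0 ≤ 1 - η := by linarith
  have h4 : ((1 / y) * (1 - η) * (w x * pp y f) * (1 - η)) * (y ^ 3 * (1 - η))
      ≤ ((1 / y) * (1 - η) * (w x * pp y f) * (1 - η)) * ∑ u ∈ Pᶜ, w u := by gcongr
  have h6 : ((1 / y) * (1 - η) * (w x * pp y f) * (1 - η)) * (y ^ 3 * (1 - η))
      = (w x / y) * ((1 + f / y) * ((1 - η) ^ 3)) := by rw [← H.p_eq]; ring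
  have h7 : (w x / y) * (1 - 4 * η) ≤ (w x / y) * ((1 + f / y) * ((1 - η) ^ 3)) := by
    gcongr
    have e1 : 1 - 4 * η ≤ (1 - η) ^ 3 := by
      have : 1 - 2 * η ≤ (1 - η) ^ 2 := by nlinarith
      nlinarith
    have e2 : 0 ≤ (1 - η) ^ 3 := by positivity
    nlinarith
  have h8 : ((1 - 4 * η) / y) * (t + w x) - ((1 - 4 * η) / y) * t = ((w x / y) * (1 - 4 * η)) := by
    ring
  rw [h8, ← Finset.mul_sum]
  linarith

end six

section two
variable {n : ℕ} {w : Fin n → ℝ} {y f C η K δ : ℝ}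

noncomputable def g1 (y f C η t : ℝ) : ℝ :=
  (t + ((1 - 8 * η) * f / y * t - C * (1 + 6 * η) / (2 * y ^ 3) * t ^ 2)) / y

noncomputable def g2 (y f C η t : ℝ) : ℝ :=
  -((t + ((1 + 8 * η) * f / y * t - C * (1 - 4 * η) / (2 * y ^ 3) * t ^ 2)) / y)

lemma g1_inc {y : ℝ} (hy : 0 < y) (f C η t v : ℝ) : g1 y f C η (t + v) - g1 y f C η t
      = (v / y) * (1 + (1 - 8 * η) * (f / y) - (1 + 6 * η) * (C * t / y ^ 3))
        - C * (1 + 6 * η) / (2 * y ^ 3) * v ^ 2 / y := by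
  unfold g1
  field_simp
  ring

lemma g2_inc {y : ℝ} (hy : 0 < y) (f C η t v : ℝ) : g2 y f C η (t + v) - g2 y f C η t
      = -((v / y) * (1 + (1 + 8 * η) * (f / y) - (1 - 4 * η) * (C * t / y ^ 3)
        - C * (1 - 4 * η) * v / (2 * y ^ 3))) := by
  unfold g2
  field_simp
  ring

lemma core1 {a b τ η : ℝ} (hη : 0 < η) (hη1 : η ≤ 1 / 100) (ha : 0 < a) (ha1 : a ≤ η / 4)
    (hτ0 : 0 ≤ τ) (hb0 : 0 ≤ b) (hba : b ≤ η * a) : 1 + (1 - 8 * η) * a - (1 + 6 * η) * τ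
      ≤ (1 + a) * (1 - b - (1 + 4 * η) * τ - 2 * η * a) := by
  have e0 : 0 ≤ η * a := by positivity
  have e1 : (1 + a) * b ≤ 2 * (η * a) := by
    apply mul_le_mul (by linarith) hba hb0 (by norm_num)
  have e2 : (1 + a) * (1 + 4 * η) ≤ 1 + 6 * η := by nlinarith
  have e3 : (1 + a) * (1 + 4 * η) * τ ≤ (1 + 6 * η) * τ := by gcongr
  have e4 : (1 + a) * (η * a) ≤ 2 * (η * a) := by
    gcongr
    linarith
  linarith

lemma core2 {a b τ η z : ℝ} (hη : 0 < η) (hη1 : η ≤ 1 / 100) (ha : 0 < a) (ha1 : a ≤ η / 4)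
    (hτ0 : 0 ≤ τ) (hb0 : 0 ≤ b) (hba : b ≤ η * a) (hz : z ≤ η * a) :
    (1 + a) * (1 + b - (1 - 4 * η) * τ + η * a) ≤ 1 + (1 + 8 * η) * a - (1 - 4 * η) * τ - z := by
  have e0 : 0 ≤ η * a := by positivity
  have e1 : (1 + a) * b ≤ 2 * (η * a) := by
    apply mul_le_mul (by linarith) hba hb0 (by norm_num)
  have e3 : 0 ≤ a * ((1 - 4 * η) * τ) := by
    have : 0 ≤ 1 - 4 * η := by linarith
    positivity
  have e4 : (1 + a) * (η * a) ≤ 2 * (η * a) := by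
    gcongr
    linarith
  linarith

set_option maxHeartbeats 1000000 in
lemma FH.one_explore (H : FH n w y f C η K δ) (P : Finset (Fin n)) (x : Fin n) (t : ℝ) (ht : 0 ≤ t)
    (hP : ∑ u ∈ P, w u ^ 2 ≤ C * (1 + 4 * η) * t + 2 * η * f * y ^ 2) :
    ∑ u ∈ Pᶜ, (Real.exp (-(w u / y)) - 1) * (1 - Real.exp (-(w x * w u * pp y f)))
      + (g1 y f C η (t + w x) - g1 y f C η t) ≤ 0 := by
  have hy := H.y0
  have hp := H.p0
  have hx := H.w_pos x
  have hδ := H.δ0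
  have hC := H.C0
  have hη := H.η0
  have hη1 := H.η1
  have hδη := H.δη
  have ha := H.a_le
  have hterm : ∀ u ∈ Pᶜ, (Real.exp (-(w u / y)) - 1) * (1 - Real.exp (-(w x * w u * pp y f)))
      ≤ -(w x * pp y f / y) * (w u ^ 2 - (1 / y) * w u ^ 3) := by
    intro u _
    have hu := H.w_pos u
    have h1 : w u / y ≤ δ := by rw [div_le_iff₀ hy]; exact H.wmax u
    have h0 : 0 < w u / y := by positivity
    have h4 := exp_neg_le_quad h0.le
    set z := w u / y with hz
    have hwz : w u = z * y := by rw [hz]; field_simp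
    have h5 : z * (1 - z / 2) ≤ 1 - Real.exp (-z) := by nlinarith
    have h6 : w x * pp y f * (w u * (1 - z / 2)) ≤ 1 - Real.exp (-(w x * w u * pp y f)) := by
      have : z / 2 = w u / (2 * y) := by rw [hz]; field_simp
      rw [this]
      exact H.q_lb x u
    have h9 : 0 ≤ 1 - z / 2 := by linarith
    have h7 : (z * (1 - z / 2)) * (w x * pp y f * (w u * (1 - z / 2)))
        ≤ (1 - Real.exp (-z)) * (1 - Real.exp (-(w x * w u * pp y f))) := by
      exact mul_le_mul h5 h6 (by positivity) (le_trans (by positivity) h5)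
    have h8 : -(w x * pp y f / y) * (w u ^ 2 - (1 / y) * w u ^ 3)
        = -((w x * pp y f * w u * z) * (1 - z)) := by
      rw [hwz]; field_simp
    have h10 : (z * (1 - z / 2)) * (w x * pp y f * (w u * (1 - z / 2)))
        = (w x * pp y f * w u * z) * ((1 - z / 2) ^ 2) := by ring
    have h11 : (w x * pp y f * w u * z) * (1 - z) ≤ (w x * pp y f * w u * z) * ((1 - z / 2) ^ 2) := by
      gcongr
      nlinarith
    rw [h8]
    linarith
  have hsum := Finset.sum_le_sum hterm
  rw [← Finset.mul_sum, Finset.sum_sub_distrib, ← Finset.mul_sum] at hsum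
  have h3 := (sum_compl_le (fun u => w u ^ 3) (fun i => by have := H.w_pos i; positivity) P).trans H.s3
  have h2 : y ^ 3 - η * y ^ 2 - (C * (1 + 4 * η) * t + 2 * η * f * y ^ 2) ≤ ∑ u ∈ Pᶜ, w u ^ 2 := by
    rw [sum_compl_eq]
    linarith [H.s2l]
  have h3' : (1 / y) * ∑ u ∈ Pᶜ, w u ^ 3 ≤ (1 / y) * (C * (1 + η) * y ^ 3) := by gcongr
  have h3'' : (1 / y) * (C * (1 + η) * y ^ 3) = C * (1 + η) * y ^ 2 := by field_simp
  rw [h3''] at h3'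
  set X := ∑ u ∈ Pᶜ, w u ^ 2 - (1 / y) * ∑ u ∈ Pᶜ, w u ^ 3 with hX
  set a := f / y with haa
  have hf : f = a * y := by rw [haa]; field_simp
  set b := (η + C * (1 + η)) / y with hb
  set τ := C * t / y ^ 3 with hτ
  have hτ0 : 0 ≤ τ := by positivity
  have hb0 : 0 ≤ b := by positivity
  have hba : b ≤ η * a := by
    rw [hb, div_le_iff₀ hy, mul_assoc, ← hf]
    have := H.fF
    nlinarith
  have hXlb : y ^ 3 * (1 - b - (1 + 4 * η) * τ - 2 * η * a) ≤ X := by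
    have : y ^ 3 * (1 - b - (1 + 4 * η) * τ - 2 * η * a)
        = y ^ 3 - η * y ^ 2 - (C * (1 + 4 * η) * t + 2 * η * f * y ^ 2) - C * (1 + η) * y ^ 2 := by
      rw [hb, hτ, hf]; field_simp; ring
    rw [this]; linarith
  have hmain : (w x * pp y f / y) * (y ^ 3 * (1 - b - (1 + 4 * η) * τ - 2 * η * a))
      ≤ (w x * pp y f / y) * X := by gcongr
  have heq : (w x * pp y f / y) * (y ^ 3 * (1 - b - (1 + 4 * η) * τ - 2 * η * a))
      = (w x / y) * ((1 + a) * (1 - b - (1 + 4 * η) * τ - 2 * η * a)) := by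
    have := H.p_eq
    rw [← haa] at this
    rw [← this]; ring
  have hcore : 1 + (1 - 8 * η) * a - (1 + 6 * η) * τ
      ≤ (1 + a) * (1 - b - (1 + 4 * η) * τ - 2 * η * a) := by
    exact core1 hη hη1 ha.1 (ha.2.trans hδη) hτ0 hb0 hba
  have hg : g1 y f C η (t + w x) - g1 y f C η t
      ≤ (w x / y) * (1 + (1 - 8 * η) * a - (1 + 6 * η) * τ) := by
    have : g1 y f C η (t + w x) - g1 y f C η t
      = (w x / y) * (1 + (1 - 8 * η) * a - (1 + 6 * η) * τ)
        - C * (1 + 6 * η) / (2 * y ^ 3) * w x ^ 2 / y := by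
      exact g1_inc hy f C η t (w x)
    rw [this]
    have : 0 ≤ C * (1 + 6 * η) / (2 * y ^ 3) * w x ^ 2 / y := by positivity
    linarith
  have hcore' : (w x / y) * (1 + (1 - 8 * η) * a - (1 + 6 * η) * τ)
      ≤ (w x / y) * ((1 + a) * (1 - b - (1 + 4 * η) * τ - 2 * η * a)) := by gcongr
  linarith

lemma FH.one_root (H : FH n w y f C η K δ) (D : Finset (Fin n))
    (hD : ∑ u ∈ D, w u ^ 2 ≤ y ^ 3 / 4) :
    ∑ v ∈ Dᶜ, w v * Real.exp (-(w v / y)) ≤ Real.exp (-(1 / (4 * y))) * ∑ v ∈ Dᶜ, w v := by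
  have hy := H.y0
  have hδ := H.δ0
  have hC := H.C0
  have hη := H.η0
  have hη1 := H.η1
  have hδη := H.δη
  have hterm : ∀ u ∈ Dᶜ, w u * Real.exp (-(w u / y))
      ≤ w u - ((1 / y) * w u ^ 2 - 1 / (2 * y ^ 2) * w u ^ 3) := by
    intro u _
    have hu := H.w_pos u
    have h4 := exp_neg_le_quad (z := w u / y) (by positivity)
    calc _ ≤ w u * (1 - w u / y + (w u / y) ^ 2 / 2) := by gcongr
      _ = _ := by field_simp; ring
  have hsum := Finset.sum_le_sum hterm
  rw [Finset.sum_sub_distrib, Finset.sum_sub_distrib, ← Finset.mul_sum, ← Finset.mul_sum] at hsum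
  have h3 := (sum_compl_le (fun u => w u ^ 3) (fun i => by have := H.w_pos i; positivity) D).trans H.s3
  have h1 := (sum_compl_le w (fun i => (H.w_pos i).le) D)
  rw [H.s1] at h1
  have h10 : 0 ≤ ∑ v ∈ Dᶜ, w v := Finset.sum_nonneg fun i _ => (H.w_pos i).le
  have h2 : y ^ 3 / 2 ≤ ∑ u ∈ Dᶜ, w u ^ 2 := by
    rw [sum_compl_eq]
    have := H.s2l
    have e : η * y ^ 2 ≤ y ^ 3 / 4 := by
      have : η * y ^ 2 ≤ (y / 4) * y ^ 2 := by
        gcongr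
        linarith [H.y1]
      linarith
    linarith
  have h2' : (1 / y) * (y ^ 3 / 2) ≤ (1 / y) * ∑ u ∈ Dᶜ, w u ^ 2 := by gcongr
  have h3' : 1 / (2 * y ^ 2) * ∑ u ∈ Dᶜ, w u ^ 3 ≤ 1 / (2 * y ^ 2) * (C * (1 + η) * y ^ 3) := by gcongr
  have e1 : (1 / y) * (y ^ 3 / 2) = y ^ 2 / 2 := by field_simp
  have e2 : 1 / (2 * y ^ 2) * (C * (1 + η) * y ^ 3) = (C * (1 + η) / 2) * y := by field_simp
  have e3 : (C * (1 + η) / 2) * y ≤ (y / 4) * y := by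
    have h : C * (1 + η) / 2 ≤ y / 4 := by nlinarith [H.yC]
    exact mul_le_mul_of_nonneg_right h hy.le
  have h7 : (-(1 / (4 * y)) + 1) * ∑ v ∈ Dᶜ, w v ≤ Real.exp (-(1 / (4 * y))) * ∑ v ∈ Dᶜ, w v :=
    mul_le_mul_of_nonneg_right (Real.add_one_le_exp _) h10
  have h8 : (1 / (4 * y)) * ∑ v ∈ Dᶜ, w v ≤ (1 / (4 * y)) * y ^ 3 := by gcongr
  have e4 : (1 / (4 * y)) * y ^ 3 = y ^ 2 / 4 := by field_simp
  nlinarith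

set_option maxHeartbeats 1000000 in
lemma FH.two_explore (H : FH n w y f C η K δ) (P : Finset (Fin n)) (x : Fin n) (t : ℝ) (ht : 0 ≤ t)
    (hP : C * (1 - 4 * η) * t - η * f * y ^ 2 ≤ ∑ u ∈ P, w u ^ 2) :
    ∑ u ∈ Pᶜ, (Real.exp (w u / y) - 1) * (1 - Real.exp (-(w x * w u * pp y f)))
      + (g2 y f C η (t + w x) - g2 y f C η t) ≤ 0 := by
  have hy := H.y0
  have hp := H.p0
  have hx := H.w_pos x
  have hδ := H.δ0
  have hC := H.C0
  have hη := H.η0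
  have hη1 := H.η1
  have hδη := H.δη
  have ha := H.a_le
  have hterm : ∀ u ∈ Pᶜ, (Real.exp (w u / y) - 1) * (1 - Real.exp (-(w x * w u * pp y f)))
      ≤ (w x * pp y f / y) * (w u ^ 2 + (1 / y) * w u ^ 3) := by
    intro u _
    have hu := H.w_pos u
    have h1 : w u / y ≤ δ := by rw [div_le_iff₀ hy]; exact H.wmax u
    have h0 : 0 < w u / y := by positivity
    have h4 := exp_sub_one_le h0.le (by linarith)
    calc _ ≤ (w u / y + (w u / y) ^ 2) * (w x * pp y f * w u) := by
          gcongr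
          · exact H.q_nn x u
          · exact H.q_ub x u
      _ = _ := by field_simp
  have hsum := Finset.sum_le_sum hterm
  rw [← Finset.mul_sum, Finset.sum_add_distrib, ← Finset.mul_sum] at hsum
  have h3 := (sum_compl_le (fun u => w u ^ 3) (fun i => by have := H.w_pos i; positivity) P).trans H.s3
  have h2 : ∑ u ∈ Pᶜ, w u ^ 2 ≤ y ^ 3 + η * y ^ 2 - (C * (1 - 4 * η) * t - η * f * y ^ 2) := by
    rw [sum_compl_eq]
    linarith [H.s2u]
  have h3' : (1 / y) * ∑ u ∈ Pᶜ, w u ^ 3 ≤ (1 / y) * (C * (1 + η) * y ^ 3) := by gcongr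
  have h3'' : (1 / y) * (C * (1 + η) * y ^ 3) = C * (1 + η) * y ^ 2 := by field_simp
  rw [h3''] at h3'
  set X := ∑ u ∈ Pᶜ, w u ^ 2 + (1 / y) * ∑ u ∈ Pᶜ, w u ^ 3 with hX
  set a := f / y with haa
  have hf : f = a * y := by rw [haa]; field_simp
  set b := (η + C * (1 + η)) / y with hb
  set τ := C * t / y ^ 3 with hτ
  have hτ0 : 0 ≤ τ := by positivity
  have hb0 : 0 ≤ b := by positivity
  have hba : b ≤ η * a := by
    rw [hb, div_le_iff₀ hy, mul_assoc, ← hf]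
    have := H.fF
    nlinarith
  have hXub : X ≤ y ^ 3 * (1 + b - (1 - 4 * η) * τ + η * a) := by
    have : y ^ 3 * (1 + b - (1 - 4 * η) * τ + η * a)
        = y ^ 3 + η * y ^ 2 - (C * (1 - 4 * η) * t - η * f * y ^ 2) + C * (1 + η) * y ^ 2 := by
      rw [hb, hτ, hf]; field_simp; ring
    rw [this]; linarith
  have hmain : (w x * pp y f / y) * X ≤
      (w x * pp y f / y) * (y ^ 3 * (1 + b - (1 - 4 * η) * τ + η * a)) := by gcongr
  have heq : (w x * pp y f / y) * (y ^ 3 * (1 + b - (1 - 4 * η) * τ + η * a))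
      = (w x / y) * ((1 + a) * (1 + b - (1 - 4 * η) * τ + η * a)) := by
    have := H.p_eq
    rw [← haa] at this
    rw [← this]; ring
  have hcw : C * w x / (2 * y ^ 3) ≤ η * a := by
    have e1 : C * w x / (2 * y ^ 3) ≤ C / y := by
      rw [div_le_div_iff₀ (by positivity) hy]
      have hw1 : w x ≤ y := (H.wmax x).trans (by nlinarith)
      have hy3 : y ^ 2 ≤ 2 * y ^ 3 := by
        have := H.y1
        nlinarith [sq_nonneg y]
      calc C * w x * y ≤ C * y * y := by gcongr
        _ = C * y ^ 2 := by ring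
        _ ≤ C * (2 * y ^ 3) := by gcongr
    have e2 : C / y ≤ b := by
      rw [hb]; gcongr; nlinarith
    linarith
  have hcore : (1 + a) * (1 + b - (1 - 4 * η) * τ + η * a) ≤
      1 + (1 + 8 * η) * a - (1 - 4 * η) * τ - C * w x / (2 * y ^ 3) := by
    exact core2 hη hη1 ha.1 (ha.2.trans hδη) hτ0 hb0 hba hcw
  have hg : g2 y f C η (t + w x) - g2 y f C η t
      ≤ -((w x / y) * (1 + (1 + 8 * η) * a - (1 - 4 * η) * τ - C * w x / (2 * y ^ 3))) := by
    have : g2 y f C η (t + w x) - g2 y f C η t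
      = -((w x / y) * (1 + (1 + 8 * η) * a - (1 - 4 * η) * τ - C * (1 - 4 * η) * w x / (2 * y ^ 3))) := by
      exact g2_inc hy f C η t (w x)
    rw [this]
    have e : C * (1 - 4 * η) * w x / (2 * y ^ 3) ≤ C * w x / (2 * y ^ 3) := by
      gcongr
      nlinarith
    have e' : (w x / y) * (C * (1 - 4 * η) * w x / (2 * y ^ 3)) ≤ (w x / y) * (C * w x / (2 * y ^ 3)) := by
      gcongr
    linarith
  have hcore' : (w x / y) * ((1 + a) * (1 + b - (1 - 4 * η) * τ + η * a)) ≤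
      (w x / y) * (1 + (1 + 8 * η) * a - (1 - 4 * η) * τ - C * w x / (2 * y ^ 3)) := by gcongr
  linarith

lemma FH.two_root (H : FH n w y f C η K δ) (D : Finset (Fin n))
    (ht : ∑ u ∈ D, w u ≤ y ^ 3 / 2) :
    ∑ v ∈ Dᶜ, w v * Real.exp (w v / y) ≤ Real.exp (4 / y) * ∑ v ∈ Dᶜ, w v := by
  have hy := H.y0
  have hy1 := H.y1
  have hδ := H.δ0
  have hη := H.η0
  have hη1 := H.η1
  have hδη := H.δη
  have hU : y ^ 3 / 2 ≤ ∑ v ∈ Dᶜ, w v := by rw [sum_compl_eq, H.s1]; linarith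
  have hterm : ∀ u ∈ Dᶜ, w u * Real.exp (w u / y) ≤ w u + ((1 + δ) / y) * w u ^ 2 := by
    intro u _
    have hu := H.w_pos u
    have h1 : w u / y ≤ δ := by rw [div_le_iff₀ hy]; exact H.wmax u
    have h0 : 0 < w u / y := by positivity
    have h4 := exp_sub_one_le h0.le (by linarith)
    have h5 : Real.exp (w u / y) ≤ 1 + (1 + δ) * (w u / y) := by nlinarith
    calc _ ≤ w u * (1 + (1 + δ) * (w u / y)) := by gcongr
      _ = _ := by field_simp
  have hsum := Finset.sum_le_sum hterm
  rw [Finset.sum_add_distrib, ← Finset.mul_sum] at hsum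
  have h3 := (sum_compl_le (fun u => w u ^ 2) (fun i => by positivity) D).trans H.s2u
  have h4 : ((1 + δ) / y) * ∑ u ∈ Dᶜ, w u ^ 2 ≤ ((1 + δ) / y) * (y ^ 3 + η * y ^ 2) := by gcongr
  have h5 : ((1 + δ) / y) * (y ^ 3 + η * y ^ 2) = (1 + δ) * (y ^ 2 + η * y) := by field_simp
  have h6 : (1 + δ) * (y ^ 2 + η * y) ≤ 4 / y * (y ^ 3 / 2) := by
    have : 4 / y * (y ^ 3 / 2) = 2 * y ^ 2 := by field_simp; ring
    rw [this]
    have : η * y ≤ η * y ^ 2 := by gcongr; nlinarith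
    have : (1 + δ) * (1 + η) ≤ 2 := by nlinarith
    calc (1 + δ) * (y ^ 2 + η * y) ≤ (1 + δ) * (y ^ 2 + η * y ^ 2) := by gcongr
      _ = ((1 + δ) * (1 + η)) * y ^ 2 := by ring
      _ ≤ 2 * y ^ 2 := by gcongr
  have h6' : 4 / y * (y ^ 3 / 2) ≤ 4 / y * ∑ v ∈ Dᶜ, w v := by gcongr
  have h7 : (4 / y + 1) * ∑ v ∈ Dᶜ, w v ≤ Real.exp (4 / y) * ∑ v ∈ Dᶜ, w v := by
    have : 0 ≤ y ^ 3 / 2 := by positivity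
    refine mul_le_mul_of_nonneg_right (Real.add_one_le_exp _) (by linarith)
  linarith

end two

/-! ### Deterministic consequences -/

lemma arith_t {y f C η t m : ℝ} (hy : 1 ≤ y) (hf : 1 ≤ f) (hC : 0 < C) (hη : 0 < η)
    (hη2 : η ≤ 1 / 200) (hfF : η + 2 * C ≤ η * f) (hm : m ≤ f * y + 1)
    (h : C * (1 - 4 * η) / (2 * y ^ 3) * t ^ 2 - (1 + 8 * η) * f / y * t < f * y + 4 * m) :
    C * t < (2 + 100 * η) * (f * y ^ 2) := by
  by_contra hcon
  push Not at hcon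
  have hy0 : 0 < y := by linarith
  have hf0 : 0 < f := by linarith
  have hfy : 1 ≤ f * y := by nlinarith
  obtain ⟨s, hs⟩ : ∃ s, t = s * (f * y ^ 2) / C := ⟨C * t / (f * y ^ 2), by field_simp⟩
  have hs2 : 2 + 100 * η ≤ s := by
    rw [hs] at hcon
    have : C * (s * (f * y ^ 2) / C) = s * (f * y ^ 2) := by field_simp
    rw [this] at hcon
    exact le_of_mul_le_mul_right hcon (by positivity)
  have e : C * (1 - 4 * η) / (2 * y ^ 3) * t ^ 2 - (1 + 8 * η) * f / y * t
      = (f * y) * (f / C * (s * ((1 - 4 * η) * s / 2 - (1 + 8 * η)))) := by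
    rw [hs]; field_simp
  rw [e] at h
  have h1 : (f * y) * (f / C * (s * ((1 - 4 * η) * s / 2 - (1 + 8 * η)))) < (f * y) * 9 := by
    linarith
  have h2 := lt_of_mul_lt_mul_left h1 (by positivity)
  have h3 : 35 * η ≤ (1 - 4 * η) * s / 2 - (1 + 8 * η) := by nlinarith
  have h4 : 2 * (35 * η) ≤ s * ((1 - 4 * η) * s / 2 - (1 + 8 * η)) :=
    mul_le_mul (by linarith) h3 (by positivity) (by linarith)
  have h5 : f / C * (2 * (35 * η)) < 9 :=
    lt_of_le_of_lt (mul_le_mul_of_nonneg_left h4 (by positivity)) h2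
  have h6 : f * (2 * (35 * η)) < 9 * C := by
    have : f / C * (2 * (35 * η)) = f * (2 * (35 * η)) / C := by ring
    rw [this, div_lt_iff₀ hC] at h5
    exact h5
  nlinarith

/-- Lower bound on the drift. -/
lemma arith_G {y f C η t : ℝ} (hy : 1 ≤ y) (hf : 1 ≤ f) (hη : 0 < η)
    (hη2 : η ≤ 1 / 200) (ht : 0 ≤ t) (h : C * t ≤ (2 - 100 * η) * (f * y ^ 2)) :
    36 * η * (f / y * t) ≤ (1 - 8 * η) * f / y * t - C * (1 + 6 * η) / (2 * y ^ 3) * t ^ 2 := by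
  have hy0 : 0 < y := by linarith
  have hf0 : 0 < f := by linarith
  have e : C * (1 + 6 * η) / (2 * y ^ 3) * t ^ 2 = ((1 + 6 * η) * t / (2 * y ^ 3)) * (C * t) := by
    ring
  have e2 : ((1 + 6 * η) * t / (2 * y ^ 3)) * ((2 - 100 * η) * (f * y ^ 2))
      = (f / y * t) * ((1 + 6 * η) * (1 - 50 * η)) := by
    field_simp; ring
  have h1 : ((1 + 6 * η) * t / (2 * y ^ 3)) * (C * t) ≤
     ((1 + 6 * η) * t / (2 * y ^ 3)) * ((2 - 100 * η) * (f * y ^ 2)) := by gcongr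
  rw [e2] at h1
  have h2 : (1 + 6 * η) * (1 - 50 * η) ≤ (1 - 8 * η) - 36 * η := by nlinarith
  have h3 : (f / y * t) * ((1 + 6 * η) * (1 - 50 * η)) ≤ (f / y * t) * ((1 - 8 * η) - 36 * η) := by
    gcongr
  have e3 : (1 - 8 * η) * f / y * t = (f / y * t) * (1 - 8 * η) := by ring
  rw [e, e3]
  linarith

structure FX (n : ℕ) (w : Fin n → ℝ) (y f C η K δ g x : ℝ) : Prop where
  H : FH n w y f C η K δ
  η2 : η ≤ 1 / 200
  δ1 : δ * (3 + 6 * C) ≤ 2 * η * C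
  δ2 : 3 * K * δ ≤ η * C
  δ3 : 6 * δ * C ≤ 1
  gone : 1 ≤ g
  gf : g ≤ f
  x0 : 0 < x
  x4 : 4 * x ≤ g
  xC : x * C ≤ η * g

section FXs
variable {n : ℕ} {w : Fin n → ℝ} {y f C η K δ g x : ℝ}

noncomputable def φA (w : Fin n → ℝ) (y : ℝ) : Fin n → ℝ := fun u => w u ^ 2 / y ^ 2
noncomputable def gA (y C η : ℝ) : ℝ → ℝ := fun t => -(C * (1 + 4 * η) / y ^ 2) * t
noncomputable def φB (w : Fin n → ℝ) (y K : ℝ) : Fin n → ℝ :=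
  fun u => if w u ≤ K then -(w u ^ 2 / y ^ 2) else 0
noncomputable def gB (y C η : ℝ) : ℝ → ℝ := fun t => (C * (1 - 4 * η) / y ^ 2) * t
noncomputable def gNp (y η : ℝ) : ℝ → ℝ := fun t => -((1 + η) / y) * t
noncomputable def gNm (y η : ℝ) : ℝ → ℝ := fun t => ((1 - 4 * η) / y) * t

def Bd (w : Fin n → ℝ) (y f C η K x : ℝ) (D Q : Finset (Fin n)) (m : ℕ) : Prop :=
  η * f ≤ pexp w (φA w y) (gA y C η) (8 * C / y ^ 2) D Q m ∨
  η * f ≤ pexp w (φB w y K) (gB y C η) 0 D Q m ∨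
  x ≤ pexp w (fun _ => 1 / y) (gNp y η) (1 / y) D Q m ∨
  x ≤ pexp w (fun _ => -(1 / y)) (gNm y η) 0 D Q m ∨
  x ≤ pexp w (fun u => -(w u / y)) (g1 y f C η) (-(1 / (4 * y))) D Q m ∨
  f ≤ pexp w (fun u => w u / y) (g2 y f C η) (4 / y) D Q m

structure GS (w : Fin n → ℝ) (y f C η x : ℝ) (D Q : Finset (Fin n)) (m : ℕ) : Prop where
  A : ∑ u ∈ D ∪ Q, w u ^ 2 ≤ C * (1 + 4 * η) * (∑ u ∈ D, w u) + 8 * C * m + η * f * y ^ 2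
  B : C * (1 - 4 * η) * (∑ u ∈ D, w u) - η * f * y ^ 2 ≤ ∑ u ∈ D ∪ Q, w u ^ 2
  Np : ((D ∪ Q).card : ℝ) ≤ (1 + η) * (∑ u ∈ D, w u) + m + x * y
  Nm : (1 - 4 * η) * (∑ u ∈ D, w u) - x * y ≤ (D ∪ Q).card
  one : (1 - 8 * η) * f / y * (∑ u ∈ D, w u) - C * (1 + 6 * η) / (2 * y ^ 3) * (∑ u ∈ D, w u) ^ 2
    + m / 4 < x * y + ∑ u ∈ Q, w u
  two : ∑ u ∈ Q, w u - ((1 + 8 * η) * f / y * (∑ u ∈ D, w u)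
    - C * (1 - 4 * η) / (2 * y ^ 3) * (∑ u ∈ D, w u) ^ 2) < f * y + 4 * m

lemma FX.gs (X : FX n w y f C η K δ g x) {D Q : Finset (Fin n)} {m : ℕ} (hd : Disjoint D Q)
    (hB : ¬ Bd w y f C η K x D Q m) : GS w y f C η x D Q m := by
  have hy := X.H.y0
  unfold Bd at hB
  push Not at hB
  obtain ⟨h1, h2, h3, h4, h5, h6⟩ := hB
  unfold pexp at *
  set t := ∑ u ∈ D, w u with ht
  have hq : ∑ u ∈ D ∪ Q, w u / y = (t + ∑ u ∈ Q, w u) / y := by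
    rw [← Finset.sum_div, Finset.sum_union hd]
  refine ⟨?_, ?_, ?_, ?_, ?_, ?_⟩
  · unfold φA gA at h1
    rw [← Finset.sum_div] at h1
    have e : (∑ u ∈ D ∪ Q, w u ^ 2) / y ^ 2 + -(C * (1 + 4 * η) / y ^ 2) * t - 8 * C / y ^ 2 * m
       = (∑ u ∈ D ∪ Q, w u ^ 2 - C * (1 + 4 * η) * t - 8 * C * m) / y ^ 2 := by ring
    rw [e, div_lt_iff₀ (by positivity)] at h1
    linarith
  · unfold φB gB at h2
    have e : ∑ u ∈ D ∪ Q, (if w u ≤ K then -(w u ^ 2 / y ^ 2) else 0) ≥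
      -((∑ u ∈ D ∪ Q, w u ^ 2) / y ^ 2) := by
      rw [Finset.sum_div, ← Finset.sum_neg_distrib]
      refine Finset.sum_le_sum fun u _ => ?_
      split_ifs
      · exact le_rfl
      · have : 0 ≤ w u ^ 2 / y ^ 2 := by positivity
        linarith
    have h7 : -((∑ u ∈ D ∪ Q, w u ^ 2) / y ^ 2) + (C * (1 - 4 * η) / y ^ 2) * t < η * f := by
      linarith
    have e2 : -((∑ u ∈ D ∪ Q, w u ^ 2) / y ^ 2) + (C * (1 - 4 * η) / y ^ 2) * t
      = (C * (1 - 4 * η) * t - ∑ u ∈ D ∪ Q, w u ^ 2) / y ^ 2 := by ring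
    rw [e2, div_lt_iff₀ (by positivity)] at h7
    linarith
  · unfold gNp at h3
    rw [Finset.sum_const, nsmul_eq_mul] at h3
    have e : ((D ∪ Q).card : ℝ) * (1 / y) + -((1 + η) / y) * t - 1 / y * m
       = ((D ∪ Q).card - (1 + η) * t - m) / y := by ring
    rw [e, div_lt_iff₀ (by positivity)] at h3
    linarith
  · unfold gNm at h4
    rw [Finset.sum_const, nsmul_eq_mul] at h4
    have e : ((D ∪ Q).card : ℝ) * (-(1 / y)) + ((1 - 4 * η) / y) * t - 0 * m
       = ((1 - 4 * η) * t - (D ∪ Q).card) / y := by ring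
    rw [e, div_lt_iff₀ (by positivity)] at h4
    linarith
  · unfold g1 at h5
    rw [Finset.sum_neg_distrib, hq] at h5
    have e : -((t + ∑ u ∈ Q, w u) / y) + (t + ((1 - 8 * η) * f / y * t -
        C * (1 + 6 * η) / (2 * y ^ 3) * t ^ 2)) / y - -(1 / (4 * y)) * m
       = (-∑ u ∈ Q, w u + ((1 - 8 * η) * f / y * t -
        C * (1 + 6 * η) / (2 * y ^ 3) * t ^ 2) + m / 4) / y := by ring
    rw [e, div_lt_iff₀ (by positivity)] at h5
    linarith
  · unfold g2 at h6
    rw [hq] at h6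
    have e : ((t + ∑ u ∈ Q, w u) / y) + -((t + ((1 + 8 * η) * f / y * t -
        C * (1 - 4 * η) / (2 * y ^ 3) * t ^ 2)) / y) - 4 / y * m
       = (∑ u ∈ Q, w u - ((1 + 8 * η) * f / y * t -
        C * (1 - 4 * η) / (2 * y ^ 3) * t ^ 2) - 4 * m) / y := by ring
    rw [e, div_lt_iff₀ (by positivity)] at h6
    linarith

structure GS2 (w : Fin n → ℝ) (y f C η K : ℝ) (D Q : Finset (Fin n)) : Prop where
  t0 : 0 ≤ ∑ u ∈ D, w u
  tlt : C * (∑ u ∈ D, w u) < (2 + 100 * η) * (f * y ^ 2)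
  s2 : ∑ u ∈ D ∪ Q, w u ^ 2 ≤ C * (1 + 4 * η) * (∑ u ∈ D, w u) + 2 * η * f * y ^ 2
  s2K : K * ∑ u ∈ D ∪ Q, w u ^ 2 ≤ η * C * y ^ 3
  s24 : ∑ u ∈ D ∪ Q, w u ^ 2 ≤ y ^ 3 / 4
  wP : ∑ u ∈ D ∪ Q, w u ≤ η * y ^ 3
  t2 : ∑ u ∈ D, w u ≤ y ^ 3 / 2

lemma FX.gs2 (X : FX n w y f C η K δ g x) {D Q : Finset (Fin n)} {m : ℕ}
    (hm : (m : ℝ) ≤ f * y + 1) (G : GS w y f C η x D Q m) : GS2 w y f C η K D Q := by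
  have H := X.H
  have hy := H.y0
  have hy1 := H.y1
  have hf1 := H.f1
  have hC := H.C0
  have hη := H.η0
  have hη2 := X.η2
  have hδ := H.δ0
  have hK := H.K0
  have hδη := H.δη
  have hQ : 0 ≤ ∑ u ∈ Q, w u := Finset.sum_nonneg fun i _ => (H.w_pos i).le
  have ht0 : 0 ≤ ∑ u ∈ D, w u := Finset.sum_nonneg fun i _ => (H.w_pos i).le
  have hD : ∑ u ∈ D, w u ≤ ∑ u ∈ D ∪ Q, w u :=
    Finset.sum_le_sum_of_subset_of_nonneg Finset.subset_union_left fun i _ _ => (H.w_pos i).le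
  have hA := G.A
  have hNp := G.Np
  have htwo := G.two
  set t := ∑ u ∈ D, w u
  have hWP : ∑ u ∈ D ∪ Q, w u ≤ (∑ u ∈ D ∪ Q, w u ^ 2 + (D ∪ Q).card) / 2 := by
    have : ∑ u ∈ D ∪ Q, w u ≤ ∑ u ∈ D ∪ Q, (w u ^ 2 + 1) / 2 := by
      refine Finset.sum_le_sum fun u _ => ?_
      nlinarith [sq_nonneg (w u - 1)]
    rw [← Finset.sum_div, Finset.sum_add_distrib] at this
    simpa using this
  have htlt := arith_t (t := t) hy1 hf1 hC hη hη2 H.fF hm (by linarith)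
  set S2 := ∑ u ∈ D ∪ Q, w u ^ 2
  set N : ℝ := ((D ∪ Q).card : ℝ)
  have hfy : 1 ≤ f * y := by nlinarith
  have hm2 : (m : ℝ) ≤ 2 * (f * y) := by linarith
  have e1 : 8 * C * m ≤ η * f * y ^ 2 := by
    calc 8 * C * m ≤ 8 * C * (2 * (f * y)) := by gcongr
      _ = (16 * C) * (f * y) := by ring
      _ ≤ (η * y) * (f * y) := mul_le_mul_of_nonneg_right H.yC (by positivity)
      _ = _ := by ring
  have hs2 : S2 ≤ C * (1 + 4 * η) * t + 2 * η * f * y ^ 2 := by linarith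
  have hfy2 : 0 < f * y ^ 2 := by positivity
  have hfy3 : f * y ^ 2 ≤ δ * y ^ 3 := by
    calc f * y ^ 2 ≤ (δ * y) * y ^ 2 := by gcongr; exact H.fδ
      _ = _ := by ring
  have hy3 : 0 < y ^ 3 := by positivity
  have hs3 : S2 ≤ 3 * (f * y ^ 2) := by
    have e : C * (1 + 4 * η) * t ≤ (1 + 4 * η) * ((2 + 100 * η) * (f * y ^ 2)) := by
      calc C * (1 + 4 * η) * t = (1 + 4 * η) * (C * t) := by ring
        _ ≤ _ := by gcongr
    have e' : (1 + 4 * η) * (2 + 100 * η) + 2 * η ≤ 3 := by nlinarith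
    calc S2 ≤ (1 + 4 * η) * ((2 + 100 * η) * (f * y ^ 2)) + 2 * η * f * y ^ 2 := by linarith
      _ = ((1 + 4 * η) * (2 + 100 * η) + 2 * η) * (f * y ^ 2) := by ring
      _ ≤ _ := by gcongr
  have hs4 : S2 ≤ 3 * δ * y ^ 3 := by linarith
  have hxf : 4 * x ≤ f := X.x4.trans X.gf
  have hN : C * N ≤ (3 + 3 * C) * (f * y ^ 2) := by
    have e2 : (1 + η) * (C * t) ≤ (1 + η) * ((2 + 100 * η) * (f * y ^ 2)) := by gcongr
    have e3 : (1 + η) * (2 + 100 * η) ≤ 3 := by nlinarith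
    have e4 : (1 + η) * ((2 + 100 * η) * (f * y ^ 2)) ≤ 3 * (f * y ^ 2) := by
      rw [← mul_assoc]; gcongr
    have e5 : m + x * y ≤ 3 * (f * y ^ 2) := by
      have : x * y ≤ f * y := by gcongr; linarith [X.x0]
      have : f * y ≤ f * y ^ 2 := by gcongr; nlinarith
      linarith
    calc C * N ≤ C * ((1 + η) * t + m + x * y) := by gcongr
      _ = (1 + η) * (C * t) + C * (m + x * y) := by ring
      _ ≤ 3 * (f * y ^ 2) + C * (3 * (f * y ^ 2)) :=
        add_le_add (e2.trans e4) (mul_le_mul_of_nonneg_left e5 hC.le)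
      _ = _ := by ring
  have hwP : ∑ u ∈ D ∪ Q, w u ≤ η * y ^ 3 := by
    have e2 : C * (S2 + N) ≤ (3 + 6 * C) * (δ * y ^ 3) := by
      calc C * (S2 + N) ≤ (3 + 6 * C) * (f * y ^ 2) := by nlinarith
        _ ≤ _ := by gcongr
    have e3 : (3 + 6 * C) * (δ * y ^ 3) ≤ C * (2 * η * y ^ 3) := by
      calc _ = (δ * (3 + 6 * C)) * y ^ 3 := by ring
        _ ≤ (2 * η * C) * y ^ 3 := mul_le_mul_of_nonneg_right X.δ1 (by positivity)
        _ = _ := by ring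
    have e4 := le_of_mul_le_mul_left (e2.trans e3) hC
    linarith
  refine ⟨ht0, htlt, hs2, ?_, ?_, hwP, ?_⟩
  · calc K * S2 ≤ K * (3 * δ * y ^ 3) := by gcongr
      _ = (3 * K * δ) * y ^ 3 := by ring
      _ ≤ _ := mul_le_mul_of_nonneg_right X.δ2 (by positivity)
  · calc S2 ≤ 3 * δ * y ^ 3 := hs4
      _ ≤ (1 / 4) * y ^ 3 := by gcongr; linarith
      _ = _ := by ring
  · calc t ≤ η * y ^ 3 := hD.trans hwP
      _ ≤ (1 / 2) * y ^ 3 := by gcongr; linarith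
      _ = _ := by ring


/-- Few vertices explored when the queue is empty: very few roots and very few vertices. -/
lemma FX.claim (X : FX n w y f C η K δ g x) {D : Finset (Fin n)} {m : ℕ}
    (hm : (m : ℝ) ≤ f * y + 1) (G : GS w y f C η x D ∅ m)
    (hD : C * (D.card : ℝ) ≤ (2 - 200 * η) * (f * y ^ 2)) :
    (m : ℝ) < f * y ∧ (D.card : ℝ) + 1 ≤ y ^ 2 * g / (f * C) := by
  have H := X.H
  have hy := H.y0
  have hy1 := H.y1
  have hf1 := H.f1
  have hC := H.C0
  have hη := H.η0
  have hη2 := X.η2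
  have hx := X.x0
  have hg1 := X.gone
  have G2 := X.gs2 hm G
  have ht0 := G2.t0
  have hNp := G.Np
  have hNm := G.Nm
  have hone := G.one
  rw [Finset.union_empty] at hNp hNm
  rw [Finset.sum_empty] at hone
  set t := ∑ u ∈ D, w u
  have hxf : 4 * x ≤ f := X.x4.trans X.gf
  have hfy2 : 0 < f * y ^ 2 := by positivity
  have hxy : C * (x * y) ≤ η * (f * y ^ 2) := by
    have : C ≤ η * y := by linarith [H.yC]
    calc C * (x * y) ≤ (η * y) * (f * y) := by gcongr; linarith
      _ = _ := by ring
  have ht1 : C * t ≤ (2 - 100 * η) * (f * y ^ 2) := by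
    have h1 : (1 - 4 * η) * (C * t) ≤ (2 - 199 * η) * (f * y ^ 2) := by
      have : C * ((1 - 4 * η) * t - x * y) ≤ C * D.card := by gcongr
      nlinarith
    have h2 : (2 - 199 * η) * (f * y ^ 2) ≤ (1 - 4 * η) * ((2 - 100 * η) * (f * y ^ 2)) := by
      have h3 : 2 - 199 * η ≤ (1 - 4 * η) * (2 - 100 * η) := by nlinarith
      have h4 := mul_le_mul_of_nonneg_right h3 hfy2.le
      linarith
    exact le_of_mul_le_mul_left (h1.trans h2) (by linarith)
  have hG := arith_G hy1 hf1 hη hη2 ht0 ht1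
  have hft : 0 ≤ 36 * η * (f / y * t) := by positivity
  have hm0 : (0 : ℝ) ≤ m := Nat.cast_nonneg m
  have hm4 : (m : ℝ) < 4 * x * y := by linarith
  have ht4 : 36 * η * (f / y * t) < x * y := by linarith
  have ht5 : 36 * η * f * t ≤ x * y ^ 2 := by
    have : 36 * η * (f / y * t) = 36 * η * f * t / y := by ring
    rw [this, div_lt_iff₀ hy] at ht4
    nlinarith
  refine ⟨hm4.trans_le (by gcongr), ?_⟩
  rw [le_div_iff₀ (by positivity)]
  have a1 : (D.card : ℝ) + 1 ≤ (1 + η) * t + 5 * x * y + 1 := by linarith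
  have hfpos : 0 < f := by linarith
  have a2 : (1 + η) * t * (f * C) ≤ y ^ 2 * g / 2 := by
    have b1 : η * (36 * (f * t * C)) ≤ η * (y ^ 2 * g) := by
      calc η * (36 * (f * t * C)) = (36 * η * f * t) * C := by ring
        _ ≤ (x * y ^ 2) * C := by gcongr
        _ = (x * C) * y ^ 2 := by ring
        _ ≤ (η * g) * y ^ 2 := mul_le_mul_of_nonneg_right X.xC (by positivity)
        _ = _ := by ring
    have b2 := le_of_mul_le_mul_left b1 hη
    have b3 : 0 ≤ f * t * C := by positivity
    have b4 : (1 + η) * (f * t * C) ≤ 18 * (f * t * C) := by gcongr; linarith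
    nlinarith
  have a3 : (5 * x * y + 1) * (f * C) ≤ y ^ 2 * g / 2 := by
    have hgy : 1 ≤ g * y := by nlinarith
    have b1 : 5 * x * y + 1 ≤ 3 * (g * y) := by
      have : 4 * x * y ≤ g * y := mul_le_mul_of_nonneg_right X.x4 hy.le
      linarith
    have b2 : 6 * (f * C) ≤ y := by
      calc 6 * (f * C) ≤ 6 * ((δ * y) * C) := by gcongr; exact H.fδ
        _ = (6 * δ * C) * y := by ring
        _ ≤ 1 * y := mul_le_mul_of_nonneg_right X.δ3 hy.le
        _ = y := one_mul y
    calc (5 * x * y + 1) * (f * C) ≤ (3 * (g * y)) * (f * C) := by gcongr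
      _ = (g * y / 2) * (6 * (f * C)) := by ring
      _ ≤ (g * y / 2) * y := by gcongr
      _ = _ := by ring
  calc ((D.card : ℝ) + 1) * (f * C) ≤ ((1 + η) * t + 5 * x * y + 1) * (f * C) := by gcongr
    _ = (1 + η) * t * (f * C) + (5 * x * y + 1) * (f * C) := by ring
    _ ≤ y ^ 2 * g / 2 + y ^ 2 * g / 2 := add_le_add a2 a3
    _ = _ := by ring

lemma FX.upper (X : FX n w y f C η K δ g x) {D : Finset (Fin n)} {m : ℕ}
    (hm : (m : ℝ) ≤ f * y + 1) (G : GS w y f C η x D ∅ m) :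
    C * (D.card : ℝ) ≤ (2 + 200 * η) * (f * y ^ 2) := by
  have H := X.H
  have hy := H.y0
  have hy1 := H.y1
  have hf1 := H.f1
  have hC := H.C0
  have hη := H.η0
  have hη2 := X.η2
  have hx := X.x0
  have G2 := X.gs2 hm G
  have htlt := G2.tlt
  have hNp := G.Np
  rw [Finset.union_empty] at hNp
  set t := ∑ u ∈ D, w u
  have hxf : 4 * x ≤ f := X.x4.trans X.gf
  have hfy2 : 0 < f * y ^ 2 := by positivity
  have hfy : 1 ≤ f * y := by nlinarith
  have h1 : (m : ℝ) + x * y ≤ 3 * (f * y) := by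
    have : x * y ≤ f * y := by gcongr; linarith
    linarith
  have h2 : C * (m + x * y) ≤ η * (f * y ^ 2) := by
    have : 3 * C ≤ η * y := by linarith [H.yC]
    calc C * (m + x * y) ≤ C * (3 * (f * y)) := by gcongr
      _ = (3 * C) * (f * y) := by ring
      _ ≤ (η * y) * (f * y) := by gcongr ?_ * _
      _ = _ := by ring
  have h3 : (1 + η) * (C * t) ≤ (1 + η) * ((2 + 100 * η) * (f * y ^ 2)) := by gcongr
  have h4 : (1 + η) * (2 + 100 * η) + η ≤ 2 + 200 * η := by nlinarith
  calc C * (D.card : ℝ) ≤ C * ((1 + η) * t + m + x * y) := by gcongr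
    _ = (1 + η) * (C * t) + C * (m + x * y) := by ring
    _ ≤ (1 + η) * ((2 + 100 * η) * (f * y ^ 2)) + η * (f * y ^ 2) := add_le_add h3 h2
    _ = ((1 + η) * (2 + 100 * η) + η) * (f * y ^ 2) := by ring
    _ ≤ _ := by gcongr

end FXs

section fin
variable {n : ℕ} {w : Fin n → ℝ} {y f C η K δ g x : ℝ}

noncomputable def Pot (w : Fin n → ℝ) (y f C η K x : ℝ) (D Q : Finset (Fin n)) (m : ℕ) : ℝ :=
  pot w (φA w y) (gA y C η) (8 * C / y ^ 2) (η * f) D Q m +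
  (pot w (φB w y K) (gB y C η) 0 (η * f) D Q m +
  (pot w (fun _ => 1 / y) (gNp y η) (1 / y) x D Q m +
  (pot w (fun _ => -(1 / y)) (gNm y η) 0 x D Q m +
  (pot w (fun u => -(w u / y)) (g1 y f C η) (-(1 / (4 * y))) x D Q m +
  pot w (fun u => w u / y) (g2 y f C η) (4 / y) f D Q m))))

lemma pot_nonneg (w φ : Fin n → ℝ) (g : ℝ → ℝ) (c x0 : ℝ) (D Q : Finset (Fin n)) (m : ℕ) :
    0 ≤ pot w φ g c x0 D Q m := (Real.exp_pos _).le

lemma one_le_pot {w φ : Fin n → ℝ} {g : ℝ → ℝ} {c x0 : ℝ} {D Q : Finset (Fin n)} {m : ℕ}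
    (h : x0 ≤ pexp w φ g c D Q m) : 1 ≤ pot w φ g c x0 D Q m := by
  unfold pot
  rw [Real.one_le_exp_iff]
  linarith

lemma pot_zero (w φ : Fin n → ℝ) {g : ℝ → ℝ} (c x0 : ℝ) (hg : g 0 = 0) :
    pot w φ g c x0 ∅ ∅ 0 = Real.exp (-x0) := by
  unfold pot pexp
  simp [hg]

lemma FX.hit (X : FX n w y f C η K δ g x) :
    expMeasure' n w (pp y f) {ω | ∃ k, hit (graphOf ω.1) (Bd w y f C η K x)
      (fun _ _ m => (m : ℝ) ≤ f * y + 1) k ⟨List.ofFn ω.2, ∅, ∅, 0⟩}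
    ≤ ENNReal.ofReal (2 * Real.exp (-(η * f)) + 3 * Real.exp (-x) + Real.exp (-f)) := by
  have H := X.H
  have hw := H.w_pos
  have hy := H.y0
  have hb := hit_bound hw H.p0 (Pot w y f C η K x) (Bd w y f C η K x)
    (fun _ _ m => (m : ℝ) ≤ f * y + 1) ?_ ?_ ?_ ?_
  · refine hb.trans (ENNReal.ofReal_le_ofReal (le_of_eq ?_))
    unfold Pot
    rw [pot_zero _ _ _ _ (by simp [gA]), pot_zero _ _ _ _ (by simp [gB]),
      pot_zero _ _ _ _ (by simp [gNp]), pot_zero _ _ _ _ (by simp [gNm]),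
      pot_zero _ _ _ _ (by simp [_root_.g1]), pot_zero _ _ _ _ (by simp [_root_.g2])]
    ring
  · intro D Q m
    unfold Pot
    have h := fun φ g c x0 => pot_nonneg w φ g c x0 D Q m
    have h1 := h (φA w y) (gA y C η) (8 * C / y ^ 2) (η * f)
    have h2 := h (φB w y K) (gB y C η) 0 (η * f)
    have h3 := h (fun _ => 1 / y) (gNp y η) (1 / y) x
    have h4 := h (fun _ => -(1 / y)) (gNm y η) 0 x
    have h5 := h (fun u => -(w u / y)) (_root_.g1 y f C η) (-(1 / (4 * y))) x
    have h6 := h (fun u => w u / y) (_root_.g2 y f C η) (4 / y) f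
    linarith
  · intro D Q m hB
    have h := fun φ g c x0 => pot_nonneg w φ g c x0 D Q m
    have h1 := h (φA w y) (gA y C η) (8 * C / y ^ 2) (η * f)
    have h2 := h (φB w y K) (gB y C η) 0 (η * f)
    have h3 := h (fun _ => 1 / y) (gNp y η) (1 / y) x
    have h4 := h (fun _ => -(1 / y)) (gNm y η) 0 x
    have h5 := h (fun u => -(w u / y)) (_root_.g1 y f C η) (-(1 / (4 * y))) x
    have h6 := h (fun u => w u / y) (_root_.g2 y f C η) (4 / y) f
    unfold Pot
    rcases hB with hB | hB | hB | hB | hB | hB <;>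
    · have := one_le_pot hB
      linarith
  · intro D Q m hd hR hB v hv
    have G := X.gs hd hB
    have G2 := X.gs2 hR G
    have ht0 := G2.t0
    unfold Pot
    simp only [mul_add, Finset.sum_add_distrib]
    refine add_le_add ?_ (add_le_add ?_ (add_le_add ?_ (add_le_add ?_ (add_le_add ?_ ?_)))) <;>
      refine pot_explore hw H.p0 hd hv ?_
    · exact H.A_explore _ _ _
    · exact H.B_explore _ _ _ G2.s2K
    · exact H.Np_explore _ _ _
    · exact H.Nm_explore _ _ _ G2.wP
    · exact H.one_explore _ _ _ ht0 G2.s2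
    · exact H.two_explore _ _ _ ht0 G.B
  · intro D m hR hB
    have G := X.gs (Finset.disjoint_empty_right D) hB
    have G2 := X.gs2 hR G
    have hs24 := G2.s24
    rw [Finset.union_empty] at hs24
    unfold Pot
    simp only [mul_add, Finset.sum_add_distrib]
    refine add_le_add ?_ (add_le_add ?_ (add_le_add ?_ (add_le_add ?_ (add_le_add ?_ ?_)))) <;>
      refine pot_root ?_
    · exact H.A_root _ G2.t2
    · refine root_nonpos hw _ (fun i => ?_) D
      unfold φB
      split_ifs
      · have : 0 ≤ w i ^ 2 / y ^ 2 := by positivity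
        linarith
      · exact le_rfl
    · exact FH.Np_root _
    · refine root_nonpos hw _ (fun i => ?_) D
      have : 0 ≤ 1 / y := by positivity
      linarith
    · exact H.one_root _ hs24
    · exact H.two_root _ G2.t2

lemma FX.det (X : FX n w y f C η K δ g x) (G : SimpleGraph (Fin n)) {vord : Fin n → Fin n}
    (hs : Function.Surjective vord)
    (hno : ∀ k, ¬ _root_.hit G (Bd w y f C η K x) (fun _ _ m => (m : ℝ) ≤ f * y + 1) k
      ⟨List.ofFn vord, ∅, ∅, 0⟩) (c : G.ConnectedComponent)
    (hlt : startT G vord c < Nat.floor (f * y ^ 2 / C))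
    (hge : Nat.floor (f * y ^ 2 / C) ≤ startT G vord c + csize G c) :
    (startT G vord c : ℝ) + 1 ≤ y ^ 2 * g / (f * C) ∧
    (2 - 200 * η) * (f * y ^ 2) ≤ C * ((startT G vord c + csize G c : ℕ) : ℝ) ∧
    C * ((startT G vord c + csize G c : ℕ) : ℝ) ≤ (2 + 200 * η) * (f * y ^ 2) := by
  have H := X.H
  have hy := H.y0
  have hC := H.C0
  have hf1 := H.f1
  have hη2 := X.η2
  have hfpos : 0 < f := by linarith
  have hfy2 : 0 < f * y ^ 2 := by positivity
  have hM : 0 ≤ f * y + 1 := by positivity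
  obtain ⟨k, k', m, l, l', D, D', hk, hk', hD, hD'⟩ := comp_epochs G hs c
  set s : St n := ⟨List.ofFn vord, ∅, ∅, 0⟩ with hsdef
  have nb := not_bad_of_not_hit G (Bd w y f C η K x) (f * y + 1) s hno
  rw [← hD'] at hge ⊢
  rw [← hD] at hlt ⊢
  have hT0 : 0 ≤ f * y ^ 2 / C := by positivity
  have hDT : C * (D.card : ℝ) ≤ (2 - 200 * η) * (f * y ^ 2) := by
    have h1 : (D.card : ℝ) ≤ f * y ^ 2 / C := by
      have : (D.card : ℝ) ≤ (Nat.floor (f * y ^ 2 / C) : ℝ) := by exact_mod_cast hlt.le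
      exact this.trans (Nat.floor_le hT0)
    have h2 : C * (D.card : ℝ) ≤ f * y ^ 2 := by
      rw [le_div_iff₀ hC] at h1; linarith
    nlinarith
  have hR : (m : ℝ) ≤ f * y + 1 := by
    by_contra hcon
    push Not at hcon
    obtain ⟨j, _, hjQ, hjm, hjM, hjD⟩ := exists_crossing G (f * y + 1) s (by simpa [hsdef] using hM) k
      (by rw [hk]; exact hcon)
    have hb := nb j hjm
    rw [hjQ] at hb
    rw [hk] at hjD
    have hcard : (((step G)^[j] s).D.card : ℝ) ≤ D.card := by
      exact_mod_cast Finset.card_le_card hjD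
    have := X.claim hjm (X.gs (Finset.disjoint_empty_right _) hb)
      (le_trans (mul_le_mul_of_nonneg_left hcard hC.le) hDT)
    linarith [this.1]
  have hb := nb k (by rw [hk]; exact hR)
  rw [hk] at hb
  have hcl := X.claim hR (X.gs (Finset.disjoint_empty_right _) hb) hDT
  have hR' : ((m + 1 : ℕ) : ℝ) ≤ f * y + 1 := by push_cast; linarith [hcl.1]
  have hb' := nb k' (by rw [hk']; exact hR')
  rw [hk'] at hb'
  have G' := X.gs (Finset.disjoint_empty_right _) hb'
  refine ⟨hcl.2, ?_, X.upper hR' G'⟩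
  by_contra hcon
  push Not at hcon
  have h1 := (X.claim hR' G' hcon.le).2
  have h2 : f * y ^ 2 / C < D'.card + 1 := by
    have := Nat.lt_floor_add_one (f * y ^ 2 / C)
    have h3 : (Nat.floor (f * y ^ 2 / C) : ℝ) ≤ D'.card := by exact_mod_cast hge
    linarith
  have h3 : y ^ 2 * g / (f * C) ≤ f * y ^ 2 / C := by
    rw [div_le_div_iff₀ (by positivity) hC]
    have : g ≤ f * f := by nlinarith [X.gf]
    calc y ^ 2 * g * C ≤ y ^ 2 * (f * f) * C := by gcongr
      _ = _ := by ring
  linarith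

lemma FX.finite (X : FX n w y f C η K δ g x) :
    expMeasure' n w (pp y f) {ω | ¬ ∀ c : (graphOf ω.1).ConnectedComponent,
      (startT (graphOf ω.1) ω.2 c < Nat.floor (f * y ^ 2 / C) ∧
        Nat.floor (f * y ^ 2 / C) ≤ startT (graphOf ω.1) ω.2 c + csize (graphOf ω.1) c) →
      ((startT (graphOf ω.1) ω.2 c : ℝ) + 1 ≤ y ^ 2 * g / (f * C) ∧
        (2 - 200 * η) * (f * y ^ 2) ≤
          C * ((startT (graphOf ω.1) ω.2 c + csize (graphOf ω.1) c : ℕ) : ℝ) ∧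
        C * ((startT (graphOf ω.1) ω.2 c + csize (graphOf ω.1) c : ℕ) : ℝ)
          ≤ (2 + 200 * η) * (f * y ^ 2))}
    ≤ ENNReal.ofReal (2 * Real.exp (-(η * f)) + 3 * Real.exp (-x) + Real.exp (-f)) := by
  refine le_trans (le_trans (measure_mono (t := {ω | ∃ k, _root_.hit (graphOf ω.1) (Bd w y f C η K x)
      (fun _ _ m => (m : ℝ) ≤ f * y + 1) k ⟨List.ofFn ω.2, ∅, ∅, 0⟩} ∪
      {ω | ¬ Function.Surjective ω.2}) ?_) (measure_union_le _ _)) ?_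
  · intro ω hω
    by_contra hcon
    rw [Set.mem_union, not_or] at hcon
    obtain ⟨h1, h2⟩ := hcon
    simp only [Set.mem_ofPred_eq, not_not, not_exists] at h1 h2
    exact hω fun c hc => X.det (graphOf ω.1) h2 h1 c hc.1 hc.2
  · rw [expMeasure_nonsurj, add_zero]
    exact X.hit

end fin

section asy
variable {w : ∀ n : ℕ, Fin n → ℝ} {μ : Measure ℝ}

lemma CondC.int1 (hC : CondC w μ) : Integrable (fun x : ℝ => x) μ := by
  have := hC.isProb
  refine Integrable.mono' (g := fun x => 1 + |x ^ 3|) ?_ (by fun_prop) ?_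
  · exact (integrable_const 1).add hC.int3.abs
  · refine ae_of_all _ fun x => ?_
    rw [Real.norm_eq_abs, abs_pow]
    have h0 := abs_nonneg x
    rcases le_total |x| 1 with h | h
    · have : 0 ≤ |x| ^ 3 := by positivity
      linarith
    · have : |x| ≤ |x| ^ 3 := le_self_pow₀ h (by norm_num)
      linarith

lemma CondC.E1 (hC : CondC w μ) : 0 < ∫ x, x ∂μ := by
  have := hC.isProb
  rw [integral_pos_iff_support_of_nonneg_ae (hC.pos.mono fun x hx => hx.le) hC.int1]
  rw [pos_iff_ne_zero]
  intro h
  have h2 : ∀ᵐ x ∂μ, x ∉ Function.support (fun x : ℝ => x) := measure_eq_zero_iff_ae_notMem.1 h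
  have h3 : ∀ᵐ x ∂μ, False := by
    filter_upwards [h2, hC.pos] with x h4 h5
    simp at h4
    linarith
  rw [ae_iff] at h3
  simp at h3

lemma CondC.E3 (hC : CondC w μ) : 0 < ∫ x, x ^ 3 ∂μ := by
  have := hC.isProb
  have hn : 0 ≤ᵐ[μ] fun x => x ^ 3 := hC.pos.mono fun x hx => (pow_pos hx 3).le
  rw [integral_pos_iff_support_of_nonneg_ae hn hC.int3]
  rw [pos_iff_ne_zero]
  intro h
  have h2 : ∀ᵐ x ∂μ, x ∉ Function.support (fun x : ℝ => x ^ 3) := measure_eq_zero_iff_ae_notMem.1 h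
  have h3 : ∀ᵐ x ∂μ, False := by
    filter_upwards [h2, hC.pos] with x h4 h5
    simp at h4
    linarith
  rw [ae_iff] at h3
  simp at h3

lemma CondC.C0 (hC : CondC w μ) : 0 < Cconst μ := div_pos hC.E3 hC.E1

lemma natpow_o (a b : ℝ) (hab : a < b) :
    (fun n : ℕ => (n : ℝ) ^ a) =o[atTop] fun n : ℕ => (n : ℝ) ^ b := by
  have hpos : ∀ᶠ n : ℕ in atTop, (0 : ℝ) < n := by
    filter_upwards [eventually_gt_atTop 0] with n hn
    exact_mod_cast hn
  refine (isLittleO_iff_tendsto' ?_).2 ?_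
  · filter_upwards [hpos] with n hn h
    exact absurd h (Real.rpow_pos_of_pos hn b).ne'
  · refine ((tendsto_rpow_neg_atTop (sub_pos.2 hab)).comp tendsto_natCast_atTop_atTop).congr' ?_
    filter_upwards [hpos] with n hn
    simp only [Function.comp]
    rw [neg_sub, Real.rpow_sub hn]

lemma tendsto_div_of_o {a : ℕ → ℝ} {E r : ℝ} (hr : r < 1)
    (h : (fun n : ℕ => a n - E * (n : ℝ)) =o[atTop] fun n : ℕ => (n : ℝ) ^ r) :
    Tendsto (fun n : ℕ => a n / (n : ℝ)) atTop (𝓝 E) := by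
  have h1 : (fun n : ℕ => a n - E * (n : ℝ)) =o[atTop] fun n : ℕ => (n : ℝ) := by
    refine h.trans ?_
    simpa using natpow_o r 1 hr
  have h2 := h1.tendsto_div_nhds_zero
  have h3 : Tendsto (fun n : ℕ => (a n - E * (n : ℝ)) / n + E) atTop (𝓝 (0 + E)) :=
    h2.add tendsto_const_nhds
  rw [zero_add] at h3
  refine h3.congr' ?_
  filter_upwards [eventually_gt_atTop 0] with n hn
  have : (n : ℝ) ≠ 0 := by positivity
  field_simp
  ring

/-- truncated cubes -/
noncomputable def trunc (k : ℕ) (x : ℝ) : ℝ := (max x 0) ^ 3 * max 0 (min 1 ((k : ℝ) + 1 - x))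

lemma trunc_nonneg (k : ℕ) (x : ℝ) : 0 ≤ trunc k x := by unfold trunc; positivity

lemma trunc_le (k : ℕ) (x : ℝ) : trunc k x ≤ (max x 0) ^ 3 := by
  unfold trunc
  have : max 0 (min 1 ((k : ℝ) + 1 - x)) ≤ 1 := max_le (by norm_num) (min_le_left _ _)
  exact mul_le_of_le_one_right (by positivity) this

lemma trunc_zero (k : ℕ) (x : ℝ) (hx : (k : ℝ) + 1 < x) : trunc k x = 0 := by
  unfold trunc
  have : max 0 (min 1 ((k : ℝ) + 1 - x)) = 0 :=
    max_eq_left ((min_le_right _ _).trans (by linarith))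
  rw [this, mul_zero]

noncomputable def truncB (k : ℕ) : BoundedContinuousFunction ℝ ℝ :=
  BoundedContinuousFunction.ofNormedAddCommGroup (trunc k) (by unfold trunc; fun_prop)
    (((k : ℝ) + 1) ^ 3) (by
      intro x
      rw [Real.norm_eq_abs, abs_of_nonneg (trunc_nonneg k x)]
      by_cases hx : (k : ℝ) + 1 < x
      · rw [trunc_zero k x hx]; positivity
      · refine (trunc_le k x).trans ?_
        push Not at hx
        gcongr
        exact max_le hx (by positivity))

lemma CondC.trunc_lim (hC : CondC w μ) :
    Tendsto (fun k : ℕ => ∫ x, truncB k x ∂μ) atTop (𝓝 (∫ x, x ^ 3 ∂μ)) := by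
  refine tendsto_integral_of_dominated_convergence (fun x => |x ^ 3|) ?_ hC.int3.abs ?_ ?_
  · intro k
    exact (truncB k).continuous.aestronglyMeasurable
  · intro k
    filter_upwards [hC.pos] with x hx
    have e : truncB k x = trunc k x := rfl
    rw [e, Real.norm_eq_abs, abs_of_nonneg (trunc_nonneg k x)]
    refine (trunc_le k x).trans ?_
    rw [max_eq_left hx.le]
    exact le_abs_self _
  · filter_upwards [hC.pos] with x hx
    refine tendsto_const_nhds.congr' ?_
    obtain ⟨N, hN⟩ := exists_nat_ge x
    filter_upwards [eventually_ge_atTop N] with k hk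
    have e : truncB k x = trunc k x := rfl
    have : (N : ℝ) ≤ k := by exact_mod_cast hk
    rw [e, trunc, max_eq_left hx.le, min_eq_left (by linarith), max_eq_right (by norm_num), mul_one]

lemma CondC.ex_K (hC : CondC w μ) {η : ℝ} (hη : 0 < η) : ∃ K > 0, ∀ᶠ n : ℕ in atTop,
    Cconst μ * (1 - η) * ell w n ≤ ∑ i ∈ Finset.univ.filter (fun i => w n i ≤ K), w n i ^ 3 := by
  have hE1 := hC.E1
  have hE3 := hC.E3
  have hlt : Cconst μ * (1 - η) * (∫ x, x ∂μ) < ∫ x, x ^ 3 ∂μ := by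
    have : Cconst μ * (1 - η) * (∫ x, x ∂μ) = (1 - η) * ∫ x, x ^ 3 ∂μ := by
      unfold Cconst; field_simp
    rw [this]
    nlinarith
  obtain ⟨k, hk⟩ := (hC.trunc_lim.eventually_const_lt hlt).exists
  refine ⟨(k : ℝ) + 1, by positivity, ?_⟩
  have h1 := hC.weak (truncB k)
  have h2 := (tendsto_div_of_o (by norm_num) hC.ell_asymp).const_mul (Cconst μ * (1 - η))
  filter_upwards [h2.eventually_lt h1 hk, eventually_gt_atTop 0] with n hn hn0
  have hnpos : (0 : ℝ) < n := by exact_mod_cast hn0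
  rw [← mul_div_assoc, div_lt_div_iff_of_pos_right hnpos] at hn
  refine hn.le.trans ?_
  rw [Finset.sum_filter]
  refine Finset.sum_le_sum fun i _ => ?_
  have e : truncB k (w n i) = trunc k (w n i) := rfl
  rw [e]
  split_ifs with h
  · refine (trunc_le k _).trans ?_
    rw [max_eq_left (hC.w_pos n i).le]
  · push Not at h
    rw [trunc_zero k _ h]

lemma CondC.ell_atTop (hC : CondC w μ) : Tendsto (fun n => ell w n) atTop atTop := by
  have h := tendsto_div_of_o (by norm_num) hC.ell_asymp
  have h2 := h.pos_mul_atTop hC.E1 tendsto_natCast_atTop_atTop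
  refine h2.congr' ?_
  filter_upwards [eventually_gt_atTop 0] with n hn
  have : (n : ℝ) ≠ 0 := by positivity
  field_simp

lemma CondC.npow_O (hC : CondC w μ) {r : ℝ} (hr : 0 ≤ r) :
    (fun n : ℕ => (n : ℝ) ^ r) =O[atTop] fun n => ell w n ^ r := by
  have hE1 := hC.E1
  have h := tendsto_div_of_o (by norm_num) hC.ell_asymp
  refine IsBigO.of_bound ((2 / ∫ x, x ∂μ) ^ r) ?_
  filter_upwards [h.eventually_const_lt (show (∫ x, x ∂μ) / 2 < ∫ x, x ∂μ by linarith),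
    eventually_gt_atTop 0] with n hn hn0
  have hnpos : (0 : ℝ) < n := by exact_mod_cast hn0
  rw [lt_div_iff₀ hnpos] at hn
  have hl : 0 < ell w n := lt_trans (by positivity) hn
  rw [Real.norm_of_nonneg (by positivity), Real.norm_of_nonneg (by positivity),
    ← Real.mul_rpow (by positivity) hl.le]
  refine Real.rpow_le_rpow hnpos.le ?_ hr
  rw [div_mul_eq_mul_div, le_div_iff₀ hE1]
  linarith

lemma CondC.ev_FH (hC : CondC w μ) {f : ℕ → ℝ}
    (hf : f =o[atTop] fun n : ℕ => (n : ℝ) ^ ((1 : ℝ) / 3)) {η : ℝ} (hη : 0 < η)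
    (hη1 : η ≤ 1 / 100) : ∃ K > 0, ∀ δ, 0 < δ → δ ≤ η / 4 → ∀ᶠ n : ℕ in atTop,
      1 ≤ f n → η + 2 * Cconst μ ≤ η * f n →
      FH n (w n) (ell w n ^ ((1 : ℝ) / 3)) (f n) (Cconst μ) η K δ := by
  obtain ⟨K, hK, hKe⟩ := hC.ex_K hη
  refine ⟨K, hK, fun δ hδ hδη => ?_⟩
  have hE1 := hC.E1
  have hE3 := hC.E3
  have hC0 := hC.C0
  have hell := hC.ell_atTop
  have hytop : Tendsto (fun n => ell w n ^ ((1 : ℝ) / 3)) atTop atTop :=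
    (tendsto_rpow_atTop (by norm_num)).comp hell
  have hO1 := hC.npow_O (r := (1 : ℝ) / 3) (by norm_num)
  have hO2 := hC.npow_O (r := (2 : ℝ) / 3) (by norm_num)
  have hfe := (hf.trans_isBigO hO1).bound hδ
  have hme := (hC.max_asymp.trans_isBigO hO1).bound hδ
  have hs := hC.sq_asymp
  rw [hC.moment_eq] at hs
  have h2e := ((hs.sub hC.ell_asymp).trans_isBigO hO2).bound hη
  have hcube : Tendsto (fun n : ℕ => (∑ i : Fin n, (w n i) ^ 3) / (n : ℝ)) atTop
      (𝓝 (∫ x, x ^ 3 ∂μ)) := by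
    refine tendsto_div_of_o (r := 0) (by norm_num) ?_
    simpa using hC.cube_asymp
  have h3e := hcube.eventually_lt ((tendsto_div_of_o (by norm_num) hC.ell_asymp).const_mul
    (Cconst μ * (1 + η))) (by
      have : Cconst μ * (1 + η) * (∫ x, x ∂μ) = (1 + η) * ∫ x, x ^ 3 ∂μ := by
        unfold Cconst; field_simp
      rw [this]
      nlinarith)
  filter_upwards [hKe, hfe, hme, h2e, h3e, hell.eventually_gt_atTop 0,
    hytop.eventually_ge_atTop 1, hytop.eventually_ge_atTop (4 / η),
    hytop.eventually_ge_atTop (16 * Cconst μ / η), eventually_gt_atTop 0]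
    with n hKn hfn hmn h2n h3n hl hy1 hy4 hyC hn0 hf1 hfF
  have hnpos : (0 : ℝ) < n := by exact_mod_cast hn0
  set y := ell w n ^ ((1 : ℝ) / 3) with hy
  have hy0 : 0 < y := by linarith
  have hy3 : y ^ 3 = ell w n := by
    rw [hy, ← Real.rpow_natCast, ← Real.rpow_mul hl.le]; norm_num
  have hy2 : ell w n ^ ((2 : ℝ) / 3) = y ^ 2 := by
    rw [hy, ← Real.rpow_natCast, ← Real.rpow_mul hl.le]; norm_num
  rw [Real.norm_of_nonneg hy0.le] at hfn hmn
  rw [hy2, Real.norm_eq_abs, Real.norm_of_nonneg (show 0 ≤ y ^ 2 by positivity)] at h2n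
  have h2n' : |∑ i : Fin n, w n i ^ 2 - ell w n| ≤ η * y ^ 2 := by
    have e : ∑ i : Fin n, w n i ^ 2 - (∫ x, x ∂μ) * n - (ell w n - (∫ x, x ∂μ) * n)
      = ∑ i : Fin n, w n i ^ 2 - ell w n := by ring
    rw [← e]; exact h2n
  rw [abs_le] at h2n'
  rw [← mul_div_assoc, div_lt_div_iff_of_pos_right hnpos] at h3n
  refine ⟨hC.w_pos n, hy1, hC0, hη, hη1, hδ, hδη, hy3.symm, ?_, ?_, ?_, ?_, ?_, hf1, ?_, hfF,
    ?_, ?_⟩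
  · rw [hy3]; linarith [h2n'.2]
  · rw [hy3]; linarith [h2n'.1]
  · rw [hy3]; exact h3n.le
  · rw [hy3]; convert hKn
  · intro i
    refine le_trans ?_ ((le_abs_self _).trans hmn)
    exact le_ciSup (Set.finite_range (w n)).bddAbove i
  · exact (le_abs_self _).trans hfn
  · rw [div_le_iff₀ hη] at hy4; linarith
  · rw [div_le_iff₀ hη] at hyC; linarith

end asy

/-- Theorem of the paper: the component `H*_f` being explored at time
`⌊f ℓ_n^{2/3}/C⌋` starts its exploration before time `ℓ_n^{2/3}/(f^{1−ε} C)` and ends it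
between times `2(1−ε') f ℓ_n^{2/3}/C` and `2(1+ε') f ℓ_n^{2/3}/C`. -/
theorem exploration_times_of_giant_component
    (w : ∀ n : ℕ, Fin n → ℝ) (μ : Measure ℝ) (hC : CondC w μ)
    (ε' : ℝ) (hε0 : 0 < ε') (hε1 : ε' < 1)
    (f : ℕ → ℝ) (hf : f =o[atTop] fun n : ℕ => (n : ℝ) ^ ((1 : ℝ) / 3)) :
    ∃ A > (0 : ℝ), ∃ F : ℝ, ∀ ε : ℝ, 0 < ε → ε ≤ 1 →
      ∀ᶠ n : ℕ in atTop, F ≤ f n →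
        expMeasure' n (w n) (pf w f n)
          {ω : (Fin n → Fin n → Bool) × (Fin n → Fin n) |
            ¬ ∀ c : (graphOf ω.1).ConnectedComponent,
              (startT (graphOf ω.1) ω.2 c
                  < Nat.floor (f n * ell w n ^ ((2 : ℝ) / 3) / Cconst μ) ∧
                Nat.floor (f n * ell w n ^ ((2 : ℝ) / 3) / Cconst μ)
                  ≤ startT (graphOf ω.1) ω.2 c + csize (graphOf ω.1) c) →
              ((startT (graphOf ω.1) ω.2 c : ℝ) + 1
                  ≤ ell w n ^ ((2 : ℝ) / 3) / (f n ^ (1 - ε) * Cconst μ) ∧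
                2 * (1 - ε') * f n * ell w n ^ ((2 : ℝ) / 3) / Cconst μ
                  ≤ ((startT (graphOf ω.1) ω.2 c + csize (graphOf ω.1) c : ℕ) : ℝ) ∧
                ((startT (graphOf ω.1) ω.2 c + csize (graphOf ω.1) c : ℕ) : ℝ)
                  ≤ 2 * (1 + ε') * f n * ell w n ^ ((2 : ℝ) / 3) / Cconst μ)}
        ≤ ENNReal.ofReal (A * Real.exp (-(f n ^ ε) / A)) := by
  have hC0 := hC.C0
  set C := Cconst μ with hCdef
  obtain ⟨η, hη0, hη2, hηε⟩ : ∃ η > (0 : ℝ), η ≤ 1 / 200 ∧ 100 * η ≤ ε' :=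
    ⟨min ε' (1 / 2) / 100, by positivity, by
      have := min_le_right ε' (1 / 2 : ℝ)
      linarith, by
      have := min_le_left ε' (1 / 2 : ℝ)
      linarith⟩
  obtain ⟨K, hK, hev⟩ := hC.ev_FH hf hη0 (by linarith)
  obtain ⟨δ, hδ0, hδη, hδ1, hδ2, hδ3⟩ : ∃ δ > (0 : ℝ), δ ≤ η / 4 ∧ δ * (3 + 6 * C) ≤ 2 * η * C ∧
      3 * K * δ ≤ η * C ∧ 6 * δ * C ≤ 1 := by
    refine ⟨min (min (η / 4) (2 * η * C / (3 + 6 * C))) (min (η * C / (3 * K)) (1 / (6 * C))),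
      by positivity, ?_, ?_, ?_, ?_⟩
    · exact (min_le_left _ _).trans (min_le_left _ _)
    · rw [← le_div_iff₀ (by positivity)]
      exact (min_le_left _ _).trans (min_le_right _ _)
    · rw [mul_comm, ← le_div_iff₀ (by positivity)]
      exact (min_le_right _ _).trans (min_le_left _ _)
    · rw [mul_right_comm, mul_comm, ← le_div_iff₀ (by positivity)]
      exact (min_le_right _ _).trans (min_le_right _ _)
  obtain ⟨c₁, hc0, hc4, hcC⟩ : ∃ c₁ > (0 : ℝ), 4 * c₁ ≤ 1 ∧ c₁ * C ≤ η := by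
    refine ⟨min (1 / 4) (η / C), by positivity, ?_, ?_⟩
    · have := min_le_left (1 / 4 : ℝ) (η / C)
      linarith
    · rw [← le_div_iff₀ hC0]
      exact min_le_right _ _
  obtain ⟨c, hcp, hcη, hcc⟩ : ∃ c > (0 : ℝ), c ≤ η ∧ c ≤ c₁ :=
    ⟨min η c₁, by positivity, min_le_left _ _, min_le_right _ _⟩
  have hA0 : 0 < max 6 (1 / c) := lt_max_of_lt_left (by norm_num)
  refine ⟨max 6 (1 / c), hA0, max 1 ((η + 2 * C) / η), fun ε hε hεle => ?_⟩
  filter_upwards [hev δ hδ0 hδη, hC.ell_atTop.eventually_gt_atTop 0] with n hn hl hF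
  have hf1 : 1 ≤ f n := (le_max_left _ _).trans hF
  have hfF : η + 2 * C ≤ η * f n := by
    have := (le_max_right _ _).trans hF
    rw [div_le_iff₀ hη0] at this
    linarith
  have hfpos : 0 < f n := by linarith
  have H := hn hf1 hfF
  set y := ell w n ^ ((1 : ℝ) / 3) with hy
  have hy0 := H.y0
  have hy2 : ell w n ^ ((2 : ℝ) / 3) = y ^ 2 := by
    rw [hy, ← Real.rpow_natCast, ← Real.rpow_mul hl.le]; norm_num
  have hy4 : ell w n ^ ((4 : ℝ) / 3) = y ^ 4 := by
    rw [hy, ← Real.rpow_natCast, ← Real.rpow_mul hl.le]; norm_num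
  have hg1 : 1 ≤ f n ^ ε := Real.one_le_rpow hf1 hε.le
  have hgf : f n ^ ε ≤ f n := by
    calc f n ^ ε ≤ f n ^ (1 : ℝ) := Real.rpow_le_rpow_of_exponent_le hf1 hεle
      _ = f n := Real.rpow_one _
  have X : FX n (w n) y (f n) C η K δ (f n ^ ε) (c₁ * f n ^ ε) :=
    ⟨H, hη2, hδ1, hδ2, hδ3, hg1, hgf, by positivity, by nlinarith, by nlinarith⟩
  have hpf : pf w f n = pp y (f n) := by unfold pf pp; rw [hy4]
  rw [hpf, hy2]
  refine (measure_mono ?_).trans (X.finite.trans (ENNReal.ofReal_le_ofReal ?_))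
  · intro ω hω hall
    refine hω fun c hc => ?_
    obtain ⟨h1, h2, h3⟩ := hall c hc
    have hfy : 0 < f n * y ^ 2 := by positivity
    refine ⟨?_, ?_, ?_⟩
    · have e : y ^ 2 / (f n ^ (1 - ε) * C) = y ^ 2 * f n ^ ε / (f n * C) := by
        rw [Real.rpow_sub hfpos, Real.rpow_one]
        have : f n ^ ε ≠ 0 := by positivity
        field_simp
      rw [e]
      exact h1
    · rw [div_le_iff₀ hC0]
      have : 2 * (1 - ε') * (f n * y ^ 2) ≤ (2 - 200 * η) * (f n * y ^ 2) := by
        gcongr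
        linarith
      linarith
    · rw [le_div_iff₀ hC0]
      have : (2 + 200 * η) * (f n * y ^ 2) ≤ 2 * (1 + ε') * (f n * y ^ 2) := by
        gcongr
        linarith
      linarith
  · have hc1 : c ≤ 1 := by linarith
    have e1 : Real.exp (-(η * f n)) ≤ Real.exp (-(c * f n ^ ε)) := by
      rw [Real.exp_le_exp]
      have : c * f n ^ ε ≤ η * f n := by gcongr
      linarith
    have e2 : Real.exp (-(c₁ * f n ^ ε)) ≤ Real.exp (-(c * f n ^ ε)) := by
      rw [Real.exp_le_exp]
      have : c * f n ^ ε ≤ c₁ * f n ^ ε := by gcongr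
      linarith
    have e3 : Real.exp (-(f n)) ≤ Real.exp (-(c * f n ^ ε)) := by
      rw [Real.exp_le_exp]
      have : c * f n ^ ε ≤ 1 * f n := by gcongr
      linarith
    have e4 : Real.exp (-(c * f n ^ ε)) ≤ Real.exp (-(f n ^ ε) / max 6 (1 / c)) := by
      rw [Real.exp_le_exp, neg_div, neg_le_neg_iff, div_le_iff₀ hA0]
      have : 1 ≤ c * max 6 (1 / c) := by
        have : c * (1 / c) ≤ c * max 6 (1 / c) := by gcongr; exact le_max_right _ _
        rwa [mul_one_div_cancel hcp.ne'] at this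
      nlinarith
    calc _ ≤ 6 * Real.exp (-(c * f n ^ ε)) := by linarith
      _ ≤ _ := by
        gcongr
        exact le_max_left _ _
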